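/- arXiv:1604.08830 — 3 statements merged into one kernel-verified Lean document; each statement's English description precedes it below -/
import Mathlib

section
/- Let n ≥ 2, −∞ < μ < 1/4 and 1 < p < p_KO, where p_KO := +∞ if 0 ≤ μ < 1/4 and p_KO := 1 − 2/α₋ if μ < 0. Then there exist a constant c > 0 and a positive classical solution u of Δu + (μ/x₁²)u = u^p on ℝⁿ₊ satisfying c⁻¹ x₁^{α₋} |x|^{−α₋−2/(p−1)} ≤ u(x) ≤ c x₁^{α₋} |x|^{−α₋−2/(p−1)} for all x ∈ ℝⁿ₊. -/
open Real Set

noncomputable def lap {n : ℕ} (u : EuclideanSpace ℝ (Fin n) → ℝ)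
    (x : EuclideanSpace ℝ (Fin n)) : ℝ :=
  ∑ i : Fin n, iteratedFDeriv ℝ 2 u x ![EuclideanSpace.single i 1, EuclideanSpace.single i 1]

noncomputable def x1 {n : ℕ} (x : EuclideanSpace ℝ (Fin n)) : ℝ :=
  if h : 0 < n then x ⟨0, h⟩ else 0

def halfSpace (n : ℕ) : Set (EuclideanSpace ℝ (Fin n)) := {x | 0 < x1 x}

noncomputable def aPlus (μ : ℝ) : ℝ := 1 / 2 + Real.sqrt (1 / 4 - μ)

noncomputable def aMinus (μ : ℝ) : ℝ := 1 / 2 - Real.sqrt (1 / 4 - μ)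

noncomputable def Lam (n : ℕ) (s : ℝ) : ℝ := s * (s + n - 2)

/-!
Write `α = α₋` and `m = α / 2 + 1 / (p - 1)`. The ansatz `u(x) = x₁ ^ α |x| ^ (-2 m) g(t)` with
`t = 1 - x₁² / |x|²` has the homogeneity `-2 / (p - 1)` prescribed by the equation and turns it into
the singular ordinary differential equation
`4 (t (1 - t) g'' + (c - (c + 1 - γ) t) g') = (1 - t) ^ β g ^ p - K g` on `[0, 1)`, where
`c = (n - 1) / 2`, `γ = 1 / 2 - α`, `β = α (p - 1) / 2`. The operator on the left is
hypergeometric: `t = 0` (the `x₁`-axis) is a regular singular point, where regular solutions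
form a one-parameter family, and since `γ > 0` these solutions stay bounded at `t = 1` (the boundary
of the half-space) as long as the source is `O((1 - t) ^ δ)` with `δ > -1`; this integrability,
`β > -1`, is exactly the condition `p < p_KO`.
It remains to find a regular solution lying between two positive constants. Let
`e ∈ (0, 1)` be small. Then `exp (-L (1 - t) ^ e)` is a subsolution and `C (1 + (1 - t) ^ e)` a
supersolution once `L` and `C` are large. With the nonlinearity clipped to the strip between them,
the equation is a Volterra equation with a globally Lipschitz source, and shooting in
`g 0` produces a solution with `g 1 = 1`, which the maximum principle confines to the strip.
-/

open MeasureTheory Filter Topology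

section Volterra

/-- `D` is a causal operator (`D v t` depends only on `v` on `[0, t]`) which is Lipschitz with an
integrable, possibly unbounded, constant `k t`. This is the class of right-hand sides for which
`v t = A + ∫₀ᵗ D v` is solved on all of `[0, 1]`. -/
structure CausalLipschitz (k : ℝ → ℝ) (D : C(Icc (0 : ℝ) 1, ℝ) → ℝ → ℝ) : Prop where
  kernel_nonneg : ∀ t ∈ Ioo (0 : ℝ) 1, 0 ≤ k t
  kernel_continuousOn : ContinuousOn k (Ioo 0 1)
  kernel_integrable : IntervalIntegrable k volume 0 1
  integrable : ∀ v, IntervalIntegrable (D v) volume 0 1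
  lipschitz : ∀ v w, ∀ t ∈ Ioo (0 : ℝ) 1, ∀ m,
    (∀ s : Icc (0 : ℝ) 1, (s : ℝ) ≤ t → |v s - w s| ≤ m) → |D v t - D w t| ≤ k t * m

/-- The Bielecki weight `exp (2 ∫₀ᵗ k)`: in the sup norm weighted by its inverse, the Volterra
operator is a contraction on all of `[0, 1]`. -/
noncomputable def bieleckiWeight (k : ℝ → ℝ) (t : ℝ) : ℝ := exp (2 * ∫ s in (0 : ℝ)..t, k s)

theorem intervalIntegrable_of_mem_Icc {f : ℝ → ℝ} (hf : IntervalIntegrable f volume 0 1) {t : ℝ}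
    (ht : t ∈ Icc (0 : ℝ) 1) : IntervalIntegrable f volume 0 t :=
  hf.mono_set (by rw [uIcc_of_le zero_le_one, uIcc_of_le ht.1]; exact Icc_subset_Icc_right ht.2)

theorem continuousOn_integral_Icc {f : ℝ → ℝ} (hf : IntervalIntegrable f volume 0 1) :
    ContinuousOn (fun t => ∫ s in (0 : ℝ)..t, f s) (Icc 0 1) := by
  have := intervalIntegral.continuousOn_primitive_interval (μ := volume) (a := 0) (b := 1)
    (f := f) (by
      rw [uIcc_of_le zero_le_one]
      exact (intervalIntegrable_iff_integrableOn_Icc_of_le zero_le_one).1 hf)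
  rwa [uIcc_of_le zero_le_one] at this

namespace CausalLipschitz

variable {k : ℝ → ℝ} {D : C(Icc (0 : ℝ) 1, ℝ) → ℝ → ℝ}

theorem continuousOn_weight (h : CausalLipschitz k D) :
    ContinuousOn (bieleckiWeight k) (Icc 0 1) :=
  ((continuousOn_integral_Icc h.kernel_integrable).const_mul 2).rexp

theorem integral_weight (h : CausalLipschitz k D) {t : ℝ} (ht : t ∈ Icc (0 : ℝ) 1) :
    IntervalIntegrable (fun s => 2 * k s * bieleckiWeight k s) volume 0 t ∧
      ∫ s in (0 : ℝ)..t, 2 * k s * bieleckiWeight k s = bieleckiWeight k t - 1 := by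
  have hint : IntervalIntegrable (fun s => 2 * k s * bieleckiWeight k s) volume 0 1 :=
    (h.kernel_integrable.const_mul 2).mul_continuousOn
      (by rw [uIcc_of_le zero_le_one]; exact h.continuousOn_weight)
  refine ⟨intervalIntegrable_of_mem_Icc hint ht, ?_⟩
  have hderiv : ∀ s ∈ Ioo 0 t,
      HasDerivAt (bieleckiWeight k) (2 * k s * bieleckiWeight k s) s := fun s hs => by
    have hs1 : s ∈ Ioo (0 : ℝ) 1 := ⟨hs.1, hs.2.trans_le ht.2⟩
    have := (intervalIntegral.integral_hasDerivAt_right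
      (intervalIntegrable_of_mem_Icc h.kernel_integrable (Ioo_subset_Icc_self hs1))
      (h.kernel_continuousOn.stronglyMeasurableAtFilter isOpen_Ioo s hs1)
      (h.kernel_continuousOn.continuousAt (isOpen_Ioo.mem_nhds hs1))).const_mul 2 |>.exp
    exact this.congr_deriv (mul_comm _ _)
  rw [intervalIntegral.integral_eq_sub_of_hasDerivAt_of_le ht.1
    (h.continuousOn_weight.mono (Icc_subset_Icc_right ht.2)) hderiv
    (intervalIntegrable_of_mem_Icc hint ht)]
  simp [bieleckiWeight]

theorem one_le_weight (h : CausalLipschitz k D) {t : ℝ} (ht : t ∈ Icc (0 : ℝ) 1) :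
    1 ≤ bieleckiWeight k t := by
  refine one_le_exp (mul_nonneg zero_le_two ?_)
  refine intervalIntegral.integral_nonneg_of_ae_restrict ht.1 ?_
  rw [EventuallyLE, ae_restrict_iff' measurableSet_Icc]
  filter_upwards [Measure.ae_ne volume 0, Measure.ae_ne volume 1] with s h0 h1 hs
  exact h.kernel_nonneg s ⟨hs.1.lt_of_ne' h0, (hs.2.trans ht.2).lt_of_ne h1⟩

/-- The Bielecki weight as an element of the algebra `C([0, 1])`. -/
noncomputable def weight (h : CausalLipschitz k D) : C(Icc (0 : ℝ) 1, ℝ) :=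
  ⟨fun t => bieleckiWeight k t, h.continuousOn_weight.domRestrict⟩

/-- The Volterra operator conjugated by the Bielecki weight: `v` is a fixed point if and only if
`f = weight * v` solves `f t = A + ∫₀ᵗ D f`. -/
noncomputable def weightedVolterra (h : CausalLipschitz k D) (A : ℝ) (v : C(Icc (0 : ℝ) 1, ℝ)) :
    C(Icc (0 : ℝ) 1, ℝ) where
  toFun t := (bieleckiWeight k t)⁻¹ * (A + ∫ s in (0 : ℝ)..t, D (h.weight * v) s)
  continuous_toFun := (h.weight.continuous.inv₀ fun _ => (exp_pos _).ne').mul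
    (continuous_const.add (continuousOn_integral_Icc (h.integrable _)).domRestrict)

theorem weightedVolterra_apply (h : CausalLipschitz k D) (A : ℝ) (v : C(Icc (0 : ℝ) 1, ℝ))
    (t : Icc (0 : ℝ) 1) : h.weightedVolterra A v t =
      (bieleckiWeight k t)⁻¹ * (A + ∫ s in (0 : ℝ)..t, D (h.weight * v) s) := rfl

theorem abs_integral_sub_le (h : CausalLipschitz k D) (v w : C(Icc (0 : ℝ) 1, ℝ)) {t : ℝ}
    (ht : t ∈ Icc (0 : ℝ) 1) :
    |∫ s in (0 : ℝ)..t, (D (h.weight * v) s - D (h.weight * w) s)| ≤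
      (bieleckiWeight k t - 1) * (dist v w / 2) := by
  have hweight : ∀ {s : ℝ}, s ∈ Ioo (0 : ℝ) 1 → ∀ r : Icc (0 : ℝ) 1, (r : ℝ) ≤ s →
      bieleckiWeight k r ≤ bieleckiWeight k s := fun {s} hs r hrs => by
    refine exp_le_exp.2 (mul_le_mul_of_nonneg_left ?_ zero_le_two)
    refine intervalIntegral.integral_mono_interval le_rfl r.2.1 hrs ?_
      (intervalIntegrable_of_mem_Icc h.kernel_integrable (Ioo_subset_Icc_self hs))
    rw [EventuallyLE, ae_restrict_iff' measurableSet_Ioc]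
    exact ae_of_all _ fun q hq => h.kernel_nonneg q ⟨hq.1, hq.2.trans_lt hs.2⟩
  rw [← (h.integral_weight ht).2, ← intervalIntegral.integral_mul_const, ← Real.norm_eq_abs]
  refine intervalIntegral.norm_integral_le_of_norm_le ht.1 ?_
    ((h.integral_weight ht).1.mul_const _)
  filter_upwards [Measure.ae_ne volume 1] with s hs1 hs
  have hs' : s ∈ Ioo (0 : ℝ) 1 := ⟨hs.1, (hs.2.trans ht.2).lt_of_ne hs1⟩
  refine (h.lipschitz _ _ s hs' (bieleckiWeight k s * dist v w) fun r hrs => ?_).trans_eq (by ring)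
  have hpos : 0 < bieleckiWeight k r := exp_pos _
  calc |bieleckiWeight k r * v r - bieleckiWeight k r * w r|
      = bieleckiWeight k r * dist (v r) (w r) := by
        rw [← mul_sub, abs_mul, abs_of_pos hpos, Real.dist_eq]
    _ ≤ bieleckiWeight k s * dist v w :=
        mul_le_mul (hweight hs' r hrs) (ContinuousMap.dist_apply_le_dist r) dist_nonneg
          (exp_pos _).le

theorem dist_weightedVolterra_le (h : CausalLipschitz k D) (A B : ℝ)
    (v w : C(Icc (0 : ℝ) 1, ℝ)) :
    dist (h.weightedVolterra A v) (h.weightedVolterra B w) ≤ dist A B + dist v w / 2 := by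
  rw [ContinuousMap.dist_le (by positivity)]
  intro t
  have hE := h.one_le_weight t.2
  have hE0 : 0 < bieleckiWeight k t := one_pos.trans_le hE
  have hdiff : h.weightedVolterra A v t - h.weightedVolterra B w t =
      (bieleckiWeight k t)⁻¹ *
        (A - B + ∫ s in (0 : ℝ)..t, (D (h.weight * v) s - D (h.weight * w) s)) := by
    rw [intervalIntegral.integral_sub (intervalIntegrable_of_mem_Icc (h.integrable _) t.2)
      (intervalIntegrable_of_mem_Icc (h.integrable _) t.2)]
    rw [weightedVolterra_apply, weightedVolterra_apply]
    ring
  rw [Real.dist_eq, hdiff, abs_mul, abs_of_pos (inv_pos.2 hE0), inv_mul_le_iff₀ hE0]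
  calc |A - B + ∫ s in (0 : ℝ)..t, (D (h.weight * v) s - D (h.weight * w) s)|
      ≤ dist A B + (bieleckiWeight k t - 1) * (dist v w / 2) :=
        (abs_add_le _ _).trans (add_le_add_right (h.abs_integral_sub_le v w t.2) _)
    _ ≤ bieleckiWeight k t * (dist A B + dist v w / 2) := by
        nlinarith [dist_nonneg (x := A) (y := B), dist_nonneg (x := v) (y := w)]

theorem contractingWith (h : CausalLipschitz k D) (A : ℝ) :
    ContractingWith (1 / 2) (h.weightedVolterra A) :=
  ⟨by norm_num [← NNReal.coe_lt_coe], LipschitzWith.of_dist_le_mul fun v w =>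
    (h.dist_weightedVolterra_le A A v w).trans_eq (by rw [dist_self]; push_cast; ring)⟩

/-- The solution of `f t = A + ∫₀ᵗ D f` on `[0, 1]`. -/
noncomputable def solution (h : CausalLipschitz k D) (A : ℝ) : C(Icc (0 : ℝ) 1, ℝ) :=
  h.weight * ContractingWith.fixedPoint _ (h.contractingWith A)

theorem solution_apply (h : CausalLipschitz k D) (A : ℝ) (t : Icc (0 : ℝ) 1) :
    h.solution A t = A + ∫ s in (0 : ℝ)..t, D (h.solution A) s := by
  have hfix := DFunLike.congr_fun
    (h.contractingWith A).fixedPoint_isFixedPt.eq t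
  rw [weightedVolterra_apply] at hfix
  rw [solution, ContinuousMap.mul_apply, ← hfix]
  exact mul_inv_cancel_left₀ (exp_pos _).ne' _

theorem continuous_solution_apply (h : CausalLipschitz k D) (t : Icc (0 : ℝ) 1) :
    Continuous fun A => h.solution A t := by
  have hlip : LipschitzWith 2 fun A => ContractingWith.fixedPoint _ (h.contractingWith A) := by
    refine LipschitzWith.of_dist_le_mul fun A B => ?_
    have := h.dist_weightedVolterra_le A B (ContractingWith.fixedPoint _ (h.contractingWith A))
      (ContractingWith.fixedPoint _ (h.contractingWith B))
    rw [(h.contractingWith A).fixedPoint_isFixedPt.eq,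
      (h.contractingWith B).fixedPoint_isFixedPt.eq] at this
    rw [NNReal.coe_ofNat]
    linarith
  exact continuous_const.mul ((continuous_eval_const t).comp hlip.continuous)

theorem exists_solution_terminal_eq (h : CausalLipschitz k D) {R : ℝ}
    (hR : ∀ v, |∫ s in (0 : ℝ)..1, D v s| ≤ R) (a : ℝ) :
    ∃ (A : ℝ) (f : C(Icc (0 : ℝ) 1, ℝ)),
      (∀ t : Icc (0 : ℝ) 1, f t = A + ∫ s in (0 : ℝ)..t, D f s) ∧ f 1 = a := by
  have hend : ∀ A, h.solution A 1 = A + ∫ s in (0 : ℝ)..1, D (h.solution A) s := fun A =>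
    h.solution_apply A 1
  obtain ⟨A, hA⟩ := mem_range_of_exists_le_of_exists_ge (h.continuous_solution_apply 1)
    (c := a) ⟨a - R, by rw [hend]; linarith [(abs_le.1 (hR (h.solution (a - R)))).2]⟩
    ⟨a + R, by rw [hend]; linarith [(abs_le.1 (hR (h.solution (a + R)))).1]⟩
  exact ⟨A, h.solution A, h.solution_apply A, hA⟩

end CausalLipschitz

end Volterra

theorem contDiffOn_succ_of_hasDerivAt {f f' : ℝ → ℝ} {s : Set ℝ} {n : ℕ} (hs : IsOpen s)
    (hf' : ContDiffOn ℝ n f' s) (hf : ∀ t ∈ s, HasDerivAt f (f' t) t) :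
    ContDiffOn ℝ (n + 1) f s :=
  (contDiffOn_succ_iff_deriv_of_isOpen hs).2
    ⟨fun t ht => (hf t ht).differentiableAt.differentiableWithinAt, by simp,
      hf'.congr fun t ht => (hf t ht).deriv⟩

section RayMean

/-- The average of `H` over the segment from `0` to `t` against the weight `l ^ (c - 1)`. For
`t > 0` it is `t ^ (-c) * ∫₀ᵗ s ^ (c - 1) H s`, but in this form it is regular across `t = 0`. -/
noncomputable def rayMean (c : ℝ) (H : ℝ → ℝ) (t : ℝ) : ℝ :=
  ∫ l in (0 : ℝ)..1, l ^ (c - 1) * H (l * t)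

variable {c : ℝ} {H H₁ H₂ : ℝ → ℝ} {s : Set ℝ} {t : ℝ}

theorem mul_mem_of_starConvex (hs : StarConvex ℝ 0 s) (ht : t ∈ s) {l : ℝ}
    (hl : l ∈ uIoc (0 : ℝ) 1) : l * t ∈ s := by
  rw [uIoc_of_le zero_le_one] at hl
  exact hs.smul_mem ht hl.1.le hl.2

theorem aestronglyMeasurable_rayMean (hs : StarConvex ℝ 0 s) (hH : ContinuousOn H s)
    (ht : t ∈ s) : AEStronglyMeasurable (fun l : ℝ => l ^ (c - 1) * H (l * t))
      (volume.restrict (uIoc 0 1)) := by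
  refine (ContinuousOn.mul (fun l hl => ?_) ?_).aestronglyMeasurable measurableSet_uIoc
  · rw [uIoc_of_le zero_le_one] at hl
    exact (continuousAt_rpow_const _ _ (.inl hl.1.ne')).continuousWithinAt
  · exact hH.comp (by fun_prop) fun l hl => mul_mem_of_starConvex hs ht hl

theorem exists_norm_rpow_mul_le (hs : StarConvex ℝ 0 s) (hso : IsOpen s)
    (hH : ContinuousOn H s) (ht : t ∈ s) : ∃ U ∈ 𝓝 t, ∃ M : ℝ, U ⊆ s ∧
      ∀ x ∈ U, ∀ l ∈ uIoc (0 : ℝ) 1, ∀ c : ℝ, ‖l ^ (c - 1) * H (l * x)‖ ≤ l ^ (c - 1) * M := by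
  obtain ⟨U, hUc, htU, hUs⟩ := exists_compact_subset hso ht
  have hcont : ContinuousOn (fun q : ℝ × ℝ => H (q.1 * q.2)) (Icc 0 1 ×ˢ U) :=
    hH.comp (by fun_prop) fun q hq => hs.smul_mem (hUs hq.2) hq.1.1 hq.1.2
  obtain ⟨M, hM⟩ := (isCompact_Icc.prod hUc).exists_bound_of_continuousOn hcont
  refine ⟨U, mem_interior_iff_mem_nhds.1 htU, M, hUs, fun x hx l hl c => ?_⟩
  rw [uIoc_of_le zero_le_one] at hl
  rw [norm_mul, norm_of_nonneg (rpow_nonneg hl.1.le _)]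
  exact mul_le_mul_of_nonneg_left (hM (l, x) ⟨Ioc_subset_Icc_self hl, hx⟩)
    (rpow_nonneg hl.1.le _)

theorem intervalIntegrable_rpow_mul_const (hc : 0 < c) (M : ℝ) :
    IntervalIntegrable (fun l : ℝ => l ^ (c - 1) * M) volume 0 1 :=
  (intervalIntegral.intervalIntegrable_rpow' (by linarith)).mul_const M

theorem intervalIntegrable_rayMean (hc : 0 < c) (hs : StarConvex ℝ 0 s) (hso : IsOpen s)
    (hH : ContinuousOn H s) (ht : t ∈ s) :
    IntervalIntegrable (fun l : ℝ => l ^ (c - 1) * H (l * t)) volume 0 1 := by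
  obtain ⟨U, hU, M, -, hM⟩ := exists_norm_rpow_mul_le hs hso hH ht
  refine (intervalIntegrable_rpow_mul_const hc M).mono_fun'
    (aestronglyMeasurable_rayMean hs hH ht) ?_
  rw [EventuallyLE, ae_restrict_iff' measurableSet_uIoc]
  exact ae_of_all _ fun l hl => hM t (mem_of_mem_nhds hU) l hl c

theorem continuousOn_rayMean (hc : 0 < c) (hs : StarConvex ℝ 0 s) (hso : IsOpen s)
    (hH : ContinuousOn H s) : ContinuousOn (rayMean c H) s := by
  refine fun t ht => ContinuousAt.continuousWithinAt ?_
  obtain ⟨U, hU, M, hUs, hM⟩ := exists_norm_rpow_mul_le hs hso hH ht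
  refine intervalIntegral.continuousAt_of_dominated_interval
    (bound := fun l => l ^ (c - 1) * M) ?_ ?_ (intervalIntegrable_rpow_mul_const hc M) ?_
  · filter_upwards [hU] with x hx using aestronglyMeasurable_rayMean hs hH (hUs hx)
  · filter_upwards [hU] with x hx using ae_of_all _ fun l hl => hM x hx l hl c
  · refine ae_of_all _ fun l hl => continuousAt_const.mul ?_
    have : ContinuousAt H (l * t) :=
      hH.continuousAt (hso.mem_nhds (mul_mem_of_starConvex hs ht hl))
    exact this.comp (f := fun x => l * x) (by fun_prop)

theorem hasDerivAt_rayMean (hc : 0 < c) (hs : StarConvex ℝ 0 s) (hso : IsOpen s)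
    (hH : ContDiffOn ℝ 1 H s) (ht : t ∈ s) :
    HasDerivAt (rayMean c H) (rayMean (c + 1) (deriv H) t) t := by
  have hH' : ContinuousOn (deriv H) s := hH.continuousOn_deriv_of_isOpen hso le_rfl
  obtain ⟨U, hU, M, hUs, hM⟩ := exists_norm_rpow_mul_le hs hso hH' ht
  refine (intervalIntegral.hasDerivAt_integral_of_dominated_loc_of_deriv_le hU
    (bound := fun l => l ^ (c + 1 - 1) * M) (F := fun x l => l ^ (c - 1) * H (l * x))
    (F' := fun x l => l ^ (c + 1 - 1) * deriv H (l * x)) ?_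
    (intervalIntegrable_rayMean hc hs hso hH.continuousOn ht)
    (aestronglyMeasurable_rayMean hs hH' ht) ?_
    (intervalIntegrable_rpow_mul_const (by linarith) M) ?_).2
  · filter_upwards [hU] with x hx
    exact aestronglyMeasurable_rayMean hs hH.continuousOn (hUs hx)
  · exact ae_of_all _ fun l hl x hx => hM x hx l hl (c + 1)
  · refine ae_of_all _ fun l hl x hx => ?_
    have hlx := mul_mem_of_starConvex hs (hUs hx) hl
    have hderiv : HasDerivAt H (deriv H (l * x)) (l * x) :=
      ((hH.contDiffAt (hso.mem_nhds hlx)).differentiableAt one_ne_zero).hasDerivAt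
    rw [uIoc_of_le zero_le_one] at hl
    refine ((hderiv.comp x ((hasDerivAt_id x).const_mul l)).const_mul
      (l ^ (c - 1))).congr_deriv ?_
    rw [add_sub_right_comm, rpow_add_one hl.1.ne']
    ring

theorem contDiffOn_rayMean (hc : 0 < c) (hs : StarConvex ℝ 0 s) (hso : IsOpen s)
    (hH : ContDiffOn ℝ 1 H s) : ContDiffOn ℝ 1 (rayMean c H) s := by
  exact contDiffOn_succ_of_hasDerivAt (n := 0) hso
    (contDiffOn_zero.2 (continuousOn_rayMean (by linarith) hs hso
      (hH.continuousOn_deriv_of_isOpen hso le_rfl)))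
    fun t ht => hasDerivAt_rayMean hc hs hso hH ht

theorem rayMean_zero (hc : 0 < c) (H : ℝ → ℝ) : rayMean c H 0 = H 0 / c := by
  simp only [rayMean, mul_zero]
  rw [intervalIntegral.integral_mul_const, integral_rpow (.inl (by linarith)), one_rpow,
    sub_add_cancel, zero_rpow hc.ne', sub_zero, one_div_mul_eq_div]

theorem rayMean_sub (hc : 0 < c) (hs : StarConvex ℝ 0 s) (hso : IsOpen s)
    (hH₁ : ContinuousOn H₁ s) (hH₂ : ContinuousOn H₂ s) (ht : t ∈ s) :
    rayMean c H₁ t - rayMean c H₂ t = rayMean c (fun x => H₁ x - H₂ x) t := by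
  simp only [rayMean, mul_sub]
  exact (intervalIntegral.integral_sub (intervalIntegrable_rayMean hc hs hso hH₁ ht)
    (intervalIntegrable_rayMean hc hs hso hH₂ ht)).symm

theorem rpow_mul_rayMean (c : ℝ) (H : ℝ → ℝ) (ht : 0 < t) :
    t ^ c * rayMean c H t = ∫ x in (0 : ℝ)..t, x ^ (c - 1) * H x := by
  have hscale : ∫ l in (0 : ℝ)..1, (l * t) ^ (c - 1) * H (l * t) =
      t ^ (c - 1) * rayMean c H t := by
    rw [rayMean, ← intervalIntegral.integral_const_mul]
    refine intervalIntegral.integral_congr fun l hl => ?_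
    rw [uIcc_of_le zero_le_one] at hl
    simp only [mul_rpow hl.1 ht.le]
    ring
  have hsub := intervalIntegral.mul_integral_comp_mul_right (a := 0) (b := 1)
    (f := fun x : ℝ => x ^ (c - 1) * H x) t
  rw [hscale, zero_mul, one_mul, ← mul_assoc, mul_comm t, ← rpow_add_one ht.ne',
    sub_add_cancel] at hsub
  exact hsub

theorem hasDerivAt_rayMean_of_pos (hc : 0 < c) (hs : StarConvex ℝ 0 s) (hso : IsOpen s)
    (hH : ContinuousOn H s) (ht : t ∈ s) (ht0 : 0 < t) :
    HasDerivAt (rayMean c H) ((H t - c * rayMean c H t) / t) t := by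
  have hsub : uIcc 0 t ⊆ s := by
    rw [← segment_eq_uIcc]
    exact hs.segment_subset ht
  have hint : IntervalIntegrable (fun x => x ^ (c - 1) * H x) volume 0 t :=
    (intervalIntegral.intervalIntegrable_rpow' (by linarith)).mul_continuousOn (hH.mono hsub)
  have hcont : ContinuousOn (fun x => x ^ (c - 1) * H x) (s ∩ Ioi 0) :=
    (continuousOn_id.rpow_const fun x hx => .inl hx.2.ne').mul (hH.mono inter_subset_left)
  have hso' : IsOpen (s ∩ Ioi 0) := hso.inter isOpen_Ioi
  have hprim := intervalIntegral.integral_hasDerivAt_right hint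
    (hcont.stronglyMeasurableAtFilter hso' t ⟨ht, ht0⟩)
    (hcont.continuousAt (hso'.mem_nhds ⟨ht, ht0⟩))
  have hprod := (hasDerivAt_rpow_const (p := -c) (.inl ht0.ne')).mul hprim
  refine (hprod.congr_of_eventuallyEq ?_).congr_deriv ?_
  · filter_upwards [Ioi_mem_nhds ht0] with x hx
    rw [Pi.mul_apply, ← rpow_mul_rayMean c H hx, rpow_neg hx.le,
      inv_mul_cancel_left₀ (rpow_pos_of_pos hx c).ne']
  · rw [← rpow_mul_rayMean c H ht0, rpow_sub_one ht0.ne', rpow_sub_one ht0.ne', rpow_neg ht0.le]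
    field_simp [(rpow_pos_of_pos ht0 c).ne']
    ring

end RayMean

section Hypergeometric

/-- The hypergeometric operator `t (1 - t) f'' + (c - (c + 1 - γ) t) f'` on `[0, 1)`, with exponents
`0, 1 - c` at `t = 0` and `0, γ` at `t = 1`. -/
noncomputable def hypOp (c γ : ℝ) (f : ℝ → ℝ) (t : ℝ) : ℝ :=
  t * (1 - t) * deriv (deriv f) t + (c - (c + 1 - γ) * t) * deriv f t

/-- The derivative of the solutions of `hypOp c γ f = G` that are regular at `0`. It comes from the
divergence form `hypOp c γ f = t ^ (1 - c) (1 - t) ^ γ (t ^ c (1 - t) ^ (1 - γ) f')'`. -/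
noncomputable def hypFlux (c γ : ℝ) (G : ℝ → ℝ) (t : ℝ) : ℝ :=
  (1 - t) ^ (γ - 1) * rayMean c (fun s => (1 - s) ^ (-γ) * G s) t

variable {c γ δ η M t : ℝ} {f g G G₁ G₂ : ℝ → ℝ}

theorem hypOp_zero (c γ : ℝ) (f : ℝ → ℝ) : hypOp c γ f 0 = c * deriv f 0 := by
  simp [hypOp]

theorem starConvex_Iio_one : StarConvex ℝ 0 (Iio (1 : ℝ)) :=
  (convex_Iio 1).starConvex (mem_Iio.2 one_pos)

theorem contDiffOn_one_sub_rpow (r : ℝ) {n : WithTop ℕ∞} :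
    ContDiffOn ℝ n (fun t : ℝ => (1 - t) ^ r) (Iio 1) :=
  (contDiffOn_const.sub contDiffOn_id).rpow_const_of_ne fun _ ht => (sub_pos.2 ht).ne'

theorem continuousOn_one_sub_rpow_mul (r : ℝ) (hG : ContinuousOn G (Iio 1)) :
    ContinuousOn (fun t => (1 - t) ^ r * G t) (Iio 1) :=
  (contDiffOn_one_sub_rpow r (n := 0)).continuousOn.mul hG

theorem hasDerivAt_one_sub_rpow (r : ℝ) (ht : t < 1) :
    HasDerivAt (fun t : ℝ => (1 - t) ^ r) (-r * (1 - t) ^ (r - 1)) t := by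
  simpa using ((hasDerivAt_id t).const_sub 1).rpow_const (p := r) (.inl (sub_pos.2 ht).ne')

theorem continuousOn_hypFlux (hc : 0 < c) (hG : ContinuousOn G (Iio 1)) :
    ContinuousOn (hypFlux c γ G) (Iio 1) :=
  continuousOn_one_sub_rpow_mul _ (continuousOn_rayMean hc starConvex_Iio_one isOpen_Iio
    (continuousOn_one_sub_rpow_mul _ hG))

theorem contDiffOn_hypFlux (hc : 0 < c) (hG : ContDiffOn ℝ 1 G (Iio 1)) :
    ContDiffOn ℝ 1 (hypFlux c γ G) (Iio 1) :=
  (contDiffOn_one_sub_rpow _).mul (contDiffOn_rayMean hc starConvex_Iio_one isOpen_Iio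
    ((contDiffOn_one_sub_rpow _).mul hG))

theorem hypFlux_sub (hc : 0 < c) (hG₁ : ContinuousOn G₁ (Iio 1)) (hG₂ : ContinuousOn G₂ (Iio 1))
    (ht : t < 1) :
    hypFlux c γ G₁ t - hypFlux c γ G₂ t = hypFlux c γ (fun s => G₁ s - G₂ s) t := by
  simp only [hypFlux, ← mul_sub]
  rw [rayMean_sub hc starConvex_Iio_one isOpen_Iio (continuousOn_one_sub_rpow_mul _ hG₁)
    (continuousOn_one_sub_rpow_mul _ hG₂) ht]
  simp only [mul_sub]

theorem hypFlux_congr (h : EqOn G₁ G₂ (Icc 0 t)) (ht : 0 ≤ t) :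
    hypFlux c γ G₁ t = hypFlux c γ G₂ t := by
  simp only [hypFlux, rayMean]
  congr 1
  refine intervalIntegral.integral_congr fun l hl => ?_
  rw [uIcc_of_le zero_le_one] at hl
  simp only [h ⟨mul_nonneg hl.1 ht, mul_le_of_le_one_left ht hl.2⟩]

theorem hasDerivAt_hypFlux (hc : 0 < c) (hG : ContinuousOn G (Iio 1)) (ht : t ∈ Ioo (0 : ℝ) 1) :
    HasDerivAt (hypFlux c γ G)
      ((G t - (c - (c + 1 - γ) * t) * hypFlux c γ G t) / (t * (1 - t))) t := by
  have ht1 : 0 < 1 - t := sub_pos.2 ht.2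
  have hmean := hasDerivAt_rayMean_of_pos hc starConvex_Iio_one isOpen_Iio
    (continuousOn_one_sub_rpow_mul (-γ) hG) ht.2 ht.1
  refine ((hasDerivAt_one_sub_rpow (γ - 1) ht.2).mul hmean).congr_deriv ?_
  simp only [hypFlux]
  rw [rpow_sub_one ht1.ne', rpow_sub_one ht1.ne', rpow_neg ht1.le]
  field_simp [ht.1.ne', ht1.ne', (rpow_pos_of_pos ht1 γ).ne']
  ring

theorem hypOp_eq_of_deriv_eq_hypFlux (hc : 0 < c) (hG : ContinuousOn G (Iio 1))
    (hf : EqOn (deriv f) (hypFlux c γ G) (Ico 0 1)) (ht : t ∈ Ico (0 : ℝ) 1) :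
    hypOp c γ f t = G t := by
  rcases ht.1.eq_or_lt with rfl | ht0
  · rw [hypOp_zero, hf ht, hypFlux, rayMean_zero hc]
    simp [mul_div_cancel₀ _ hc.ne']
  · have heq : deriv f =ᶠ[𝓝 t] hypFlux c γ G := by
      filter_upwards [Ioo_mem_nhds ht0 ht.2] with s hs using hf (Ioo_subset_Ico_self hs)
    rw [hypOp, heq.deriv_eq, (hasDerivAt_hypFlux hc hG ⟨ht0, ht.2⟩).deriv, hf ht]
    field_simp [ht0.ne', (sub_pos.2 ht.2).ne']
    ring

theorem intervalIntegrable_rpow_mul_one_sub_rpow {a b : ℝ} (ha : 0 < a) (hb : 0 < b) :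
    IntervalIntegrable (fun l : ℝ => l ^ (a - 1) * (1 - l) ^ (b - 1)) volume 0 1 := by
  refine (Complex.betaIntegral_convergent (u := a) (v := b) (by simpa) (by simpa)).norm.congr_ae ?_
  rw [EventuallyEq, ae_restrict_iff' measurableSet_uIoc]
  filter_upwards [Measure.ae_ne volume 1] with l hl1 hl
  rw [uIoc_of_le zero_le_one] at hl
  rw [norm_mul, ← Complex.ofReal_one, ← Complex.ofReal_sub, ← Complex.ofReal_sub,
    ← Complex.ofReal_sub, Complex.norm_cpow_eq_rpow_re_of_pos hl.1,
    Complex.norm_cpow_eq_rpow_re_of_pos (sub_pos.2 (hl.2.lt_of_ne hl1)), Complex.ofReal_re,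
    Complex.ofReal_re]

theorem one_sub_rpow_mul_one_sub_mul_rpow_le (hηγ : η ≤ γ) (hδη : δ ≤ η) {l : ℝ}
    (hl : l ∈ Ioo (0 : ℝ) 1) (ht : t ∈ Ico (0 : ℝ) 1) :
    (1 - t) ^ (γ - 1) * (1 - l * t) ^ (δ - γ) ≤ (1 - t) ^ (η - 1) * (1 - l) ^ (δ - η) := by
  have ht1 : 0 < 1 - t := sub_pos.2 ht.2
  have hl1 : 0 < 1 - l := sub_pos.2 hl.2
  have hlt : 1 - t ≤ 1 - l * t := by nlinarith [hl.2, ht.1]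
  have hll : 1 - l ≤ 1 - l * t := by nlinarith [hl.1, ht.2]
  calc (1 - t) ^ (γ - 1) * (1 - l * t) ^ (δ - γ)
      = (1 - t) ^ (η - 1) * ((1 - t) ^ (γ - η) * (1 - l * t) ^ (δ - γ)) := by
        rw [← mul_assoc, ← rpow_add ht1]
        ring_nf
    _ ≤ (1 - t) ^ (η - 1) * ((1 - l * t) ^ (γ - η) * (1 - l * t) ^ (δ - γ)) := by
        have := rpow_nonneg (ht1.trans_le hlt).le (δ - γ)
        gcongr
    _ = (1 - t) ^ (η - 1) * (1 - l * t) ^ (δ - η) := by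
        rw [← rpow_add (ht1.trans_le hlt)]
        ring_nf
    _ ≤ (1 - t) ^ (η - 1) * (1 - l) ^ (δ - η) :=
        mul_le_mul_of_nonneg_left (rpow_le_rpow_of_nonpos hl1 hll (by linarith))
          (rpow_nonneg ht1.le _)

theorem exists_abs_hypFlux_le (hc : 0 < c) (hηγ : η ≤ γ) (hδη : δ ≤ η) (hη : η < 1 + δ) :
    ∃ R, ∀ G M, ∀ t ∈ Ico (0 : ℝ) 1, (∀ s ∈ Icc 0 t, |G s| ≤ M * (1 - s) ^ δ) →
      |hypFlux c γ G t| ≤ R * (1 - t) ^ (η - 1) * M := by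
  refine ⟨∫ l in (0 : ℝ)..1, l ^ (c - 1) * (1 - l) ^ (δ - η + 1 - 1),
    fun G M t ht hG => ?_⟩
  have hM : 0 ≤ M := (abs_nonneg _).trans (by simpa using hG 0 ⟨le_rfl, ht.1⟩)
  have hint := intervalIntegrable_rpow_mul_one_sub_rpow (b := δ - η + 1) hc (by linarith)
  rw [hypFlux, rayMean, ← intervalIntegral.integral_const_mul, mul_assoc,
    ← intervalIntegral.integral_mul_const, ← Real.norm_eq_abs]
  refine intervalIntegral.norm_integral_le_of_norm_le zero_le_one ?_ (hint.mul_const _)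
  filter_upwards [Measure.ae_ne volume 1] with l hl1 hl
  have hl' : l ∈ Ioo (0 : ℝ) 1 := ⟨hl.1, hl.2.lt_of_ne hl1⟩
  have hlt : l * t ∈ Icc 0 t := ⟨mul_nonneg hl.1.le ht.1, mul_le_of_le_one_left ht.1 hl.2⟩
  have hlt1 : 0 < 1 - l * t := sub_pos.2 (hlt.2.trans_lt ht.2)
  have hpow_nonneg : 0 ≤ (1 - t) ^ (γ - 1) * l ^ (c - 1) :=
    mul_nonneg (rpow_nonneg (sub_pos.2 ht.2).le _) (rpow_nonneg hl.1.le _)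
  calc ‖(1 - t) ^ (γ - 1) * (l ^ (c - 1) * ((1 - l * t) ^ (-γ) * G (l * t)))‖
      = (1 - t) ^ (γ - 1) * l ^ (c - 1) * ((1 - l * t) ^ (-γ) * |G (l * t)|) := by
        rw [← mul_assoc, norm_mul, norm_of_nonneg hpow_nonneg, norm_mul,
          norm_of_nonneg (rpow_nonneg hlt1.le _), Real.norm_eq_abs]
    _ ≤ (1 - t) ^ (γ - 1) * l ^ (c - 1) * ((1 - l * t) ^ (-γ) * (M * (1 - l * t) ^ δ)) :=
        mul_le_mul_of_nonneg_left (mul_le_mul_of_nonneg_left (hG _ hlt) (rpow_nonneg hlt1.le _))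
          hpow_nonneg
    _ = l ^ (c - 1) * M * ((1 - t) ^ (γ - 1) * (1 - l * t) ^ (δ - γ)) := by
        rw [sub_eq_add_neg δ γ, rpow_add hlt1]
        ring
    _ ≤ l ^ (c - 1) * M * ((1 - t) ^ (η - 1) * (1 - l) ^ (δ - η)) :=
        mul_le_mul_of_nonneg_left (one_sub_rpow_mul_one_sub_mul_rpow_le hηγ hδη hl' ht)
          (mul_nonneg (rpow_nonneg hl.1.le _) hM)
    _ = l ^ (c - 1) * (1 - l) ^ (δ - η + 1 - 1) * ((1 - t) ^ (η - 1) * M) := by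
        rw [add_sub_cancel_right]
        ring

end Hypergeometric

section Comparison

variable {c γ t : ℝ} {f g h : ℝ → ℝ}

theorem deriv_zero_nonpos_of_isMaxOn (hmax : IsMaxOn h (Icc 0 1) 0) : deriv h 0 ≤ 0 := by
  by_contra! hpos
  have hd := (differentiableAt_of_deriv_ne_zero hpos.ne').hasDerivAt
  have hslope := (hasDerivAt_iff_tendsto_slope.1 hd).eventually (eventually_gt_nhds hpos)
  have hIoo : Ioo (0 : ℝ) 1 ∈ 𝓝[>] 0 := Ioo_mem_nhdsGT one_pos
  obtain ⟨s, hs, hs01⟩ := ((hslope.filter_mono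
    (nhdsGT_le_nhdsNE 0)).and hIoo).exists
  rw [slope_def_field, sub_zero, div_pos_iff_of_pos_right hs01.1, sub_pos] at hs
  exact hs.not_ge (hmax (Ioo_subset_Icc_self hs01))

theorem deriv_deriv_nonpos_of_isLocalMax (hmax : IsLocalMax h t) (hcont : ContinuousAt h t) :
    deriv (deriv h) t ≤ 0 := by
  by_contra! hpos
  have hmin := isLocalMin_of_deriv_deriv_pos hpos hmax.deriv_eq_zero hcont
  have hconst : h =ᶠ[𝓝 t] fun _ => h t := by
    filter_upwards [hmax, hmin] with s hle hge using le_antisymm hle hge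
  have hderiv : deriv h =ᶠ[𝓝 t] fun _ => 0 := by simpa using hconst.deriv
  rw [hderiv.deriv_eq, deriv_const] at hpos
  exact hpos.false

theorem nonpos_of_hypOp_pos (hc : 0 < c) (hcont : ContinuousOn h (Icc 0 1)) (h1 : h 1 ≤ 0)
    (hop : ∀ t ∈ Ico (0 : ℝ) 1, 0 < h t → 0 < hypOp c γ h t) :
    ∀ t ∈ Icc (0 : ℝ) 1, h t ≤ 0 := by
  obtain ⟨t, ht, hmax⟩ := isCompact_Icc.exists_isMaxOn (nonempty_Icc.2 zero_le_one) hcont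
  suffices h t ≤ 0 from fun s hs => (hmax hs).trans this
  by_contra! hpos
  have ht1 : t < 1 := ht.2.lt_of_ne fun heq => (heq ▸ hpos).not_ge h1
  have hop_pos := hop t ⟨ht.1, ht1⟩ hpos
  rcases ht.1.eq_or_lt with rfl | ht0
  · rw [hypOp_zero] at hop_pos
    exact (mul_nonpos_of_nonneg_of_nonpos hc.le (deriv_zero_nonpos_of_isMaxOn hmax)).not_gt hop_pos
  · have hnhds : Icc (0 : ℝ) 1 ∈ 𝓝 t := Icc_mem_nhds ht0 ht1
    have hloc : IsLocalMax h t := hmax.isLocalMax hnhds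
    rw [hypOp, hloc.deriv_eq_zero, mul_zero, add_zero] at hop_pos
    exact (mul_nonpos_of_nonneg_of_nonpos (mul_pos ht0 (sub_pos.2 ht1)).le
      (deriv_deriv_nonpos_of_isLocalMax hloc (hcont.continuousAt hnhds))).not_gt hop_pos

/-- The regularity in which `hypOp` is considered: it makes `hypOp` additive on `[0, 1)` and allows
comparison on `[0, 1]`, while permitting unbounded derivatives at the endpoint `1`. -/
structure InHypDomain (f : ℝ → ℝ) : Prop where
  continuousOn : ContinuousOn f (Icc 0 1)
  differentiableAt : ∀ t ∈ Ico (0 : ℝ) 1, DifferentiableAt ℝ f t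
  differentiableAt_deriv : ∀ t ∈ Ioo (0 : ℝ) 1, DifferentiableAt ℝ (deriv f) t

theorem hypOp_sub (hf : InHypDomain f) (hg : InHypDomain g) (ht : t ∈ Ico (0 : ℝ) 1) :
    hypOp c γ (fun s => f s - g s) t = hypOp c γ f t - hypOp c γ g t := by
  have hderiv : ∀ s ∈ Ico (0 : ℝ) 1, deriv (fun s => f s - g s) s = deriv f s - deriv g s :=
    fun s hs => deriv_fun_sub (hf.differentiableAt s hs) (hg.differentiableAt s hs)
  rcases ht.1.eq_or_lt with rfl | ht0
  · simp only [hypOp_zero, hderiv 0 ht, mul_sub]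
  · have heq : deriv (fun s => f s - g s) =ᶠ[𝓝 t] fun s => deriv f s - deriv g s := by
      filter_upwards [Ioo_mem_nhds ht0 ht.2] with s hs using hderiv s (Ioo_subset_Ico_self hs)
    have hderiv₂ := heq.deriv_eq.trans (deriv_fun_sub (hf.differentiableAt_deriv t ⟨ht0, ht.2⟩)
      (hg.differentiableAt_deriv t ⟨ht0, ht.2⟩))
    simp only [hypOp, hderiv t ht, hderiv₂]
    ring

theorem le_of_hypOp_lt (hc : 0 < c) (hf : InHypDomain f) (hg : InHypDomain g) (h1 : f 1 ≤ g 1)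
    (hop : ∀ t ∈ Ico (0 : ℝ) 1, g t < f t → hypOp c γ g t < hypOp c γ f t) :
    ∀ t ∈ Icc (0 : ℝ) 1, f t ≤ g t := by
  have := nonpos_of_hypOp_pos (γ := γ) hc (hf.continuousOn.sub hg.continuousOn)
    (sub_nonpos.2 h1) fun t ht hpos => by
      simpa only [hypOp_sub hf hg ht, Pi.sub_def, sub_pos] using hop t ht (sub_pos.1 hpos)
  exact fun t ht => sub_nonpos.1 (this t ht)

end Comparison

section Existence

variable {c γ δ B t : ℝ} {f G : ℝ → ℝ} {N : ℝ → ℝ → ℝ} {Y : ℝ → Set ℝ} {φ ψ : ℝ → ℝ}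

theorem continuousOn_comp_max_zero (hG : ContinuousOn G (Ico 0 1)) :
    ContinuousOn (fun t => G (max t 0)) (Iio 1) :=
  hG.comp (by fun_prop) fun _ ht => ⟨le_max_right _ _, max_lt ht one_pos⟩

/-- `f` solves `hypOp c γ f = G` on `[0, 1)`, is regular at the singular point `0`, and extends
continuously to `1`. Regularity is encoded by requiring `hypFlux c γ G` as the derivative, which
excludes the solutions behaving like `t ^ (1 - c)`. -/
structure IsRegularSolution (c γ : ℝ) (G f : ℝ → ℝ) : Prop where
  continuousOn : ContinuousOn f (Icc 0 1)
  hasDerivAt : ∀ t ∈ Ico (0 : ℝ) 1, HasDerivAt f (hypFlux c γ G t) t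

namespace IsRegularSolution

theorem deriv_eqOn (h : IsRegularSolution c γ G f) :
    EqOn (deriv f) (hypFlux c γ fun s => G (max s 0)) (Ico 0 1) := fun t ht => by
  rw [(h.hasDerivAt t ht).deriv]
  exact hypFlux_congr (fun s hs => by rw [max_eq_left hs.1]) ht.1

theorem hypOp_eq (h : IsRegularSolution c γ G f) (hc : 0 < c) (hG : ContinuousOn G (Ico 0 1))
    (ht : t ∈ Ico (0 : ℝ) 1) : hypOp c γ f t = G t := by
  rw [hypOp_eq_of_deriv_eq_hypFlux hc (continuousOn_comp_max_zero hG) h.deriv_eqOn ht,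
    max_eq_left ht.1]

theorem inHypDomain (h : IsRegularSolution c γ G f) (hc : 0 < c)
    (hG : ContinuousOn G (Ico 0 1)) : InHypDomain f where
  continuousOn := h.continuousOn
  differentiableAt t ht := (h.hasDerivAt t ht).differentiableAt
  differentiableAt_deriv _ ht :=
    have hflux := hasDerivAt_hypFlux (γ := γ) hc (continuousOn_comp_max_zero hG) ht
    hflux.differentiableAt.congr_of_eventuallyEq
      (h.deriv_eqOn.mono Ioo_subset_Ico_self |>.eventuallyEq_of_mem (Ioo_mem_nhds ht.1 ht.2))

end IsRegularSolution

/-- On the values `y ∈ Y t`, the nonlinearity `N t y` is bounded and Lipschitz in `y` with constants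
`B (1 - t) ^ δ`, which may blow up at `t = 1`. -/
structure WeightedLipschitz (B δ : ℝ) (Y : ℝ → Set ℝ) (N : ℝ → ℝ → ℝ) : Prop where
  continuousOn : ContinuousOn (Function.uncurry N) (Ico 0 1 ×ˢ univ)
  bound : ∀ t ∈ Ico (0 : ℝ) 1, ∀ y ∈ Y t, |N t y| ≤ B * (1 - t) ^ δ
  lipschitz : ∀ t ∈ Ico (0 : ℝ) 1, ∀ y ∈ Y t, ∀ z ∈ Y t,
    |N t y - N t z| ≤ B * (1 - t) ^ δ * |y - z|

namespace WeightedLipschitz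

theorem continuousOn_comp (hN : WeightedLipschitz B δ Y N) (hf : ContinuousOn f (Ico 0 1)) :
    ContinuousOn (fun t => N t (f t)) (Ico 0 1) :=
  hN.continuousOn.comp (continuousOn_id.prodMk hf) fun _ ht => ⟨ht, mem_univ _⟩

theorem bound_nonneg (hN : WeightedLipschitz B δ (fun _ => univ) N) : 0 ≤ B :=
  (abs_nonneg _).trans (by simpa using hN.bound 0 ⟨le_rfl, one_pos⟩ 0 (mem_univ _))

/-- The right-hand side of the Volterra equation `f t = A + ∫₀ᵗ volterraSource N f`, whose solutions
are the regular solutions of `hypOp c γ f t = N t (f t)`. -/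
noncomputable def volterraSource (c γ : ℝ) (N : ℝ → ℝ → ℝ) (v : C(Icc (0 : ℝ) 1, ℝ)) : ℝ → ℝ :=
  hypFlux c γ fun s => N (max s 0) (IccExtend zero_le_one v (max s 0))

theorem continuousOn_extend (hN : WeightedLipschitz B δ Y N) (v : C(Icc (0 : ℝ) 1, ℝ)) :
    ContinuousOn (fun s => N (max s 0) (IccExtend zero_le_one v (max s 0))) (Iio 1) :=
  continuousOn_comp_max_zero (hN.continuousOn_comp v.continuous.Icc_extend'.continuousOn)

theorem continuousOn_volterraSource (hN : WeightedLipschitz B δ Y N) (hc : 0 < c)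
    (v : C(Icc (0 : ℝ) 1, ℝ)) : ContinuousOn (volterraSource c γ N v) (Iio 1) :=
  continuousOn_hypFlux hc (hN.continuousOn_extend v)

theorem exists_causalLipschitz (hN : WeightedLipschitz B δ (fun _ => univ) N) (hc : 0 < c)
    (hγ : 0 < γ) (hδ : -1 < δ) (hδ0 : δ ≤ 0) :
    ∃ k, CausalLipschitz k (volterraSource c γ N) ∧
      ∀ v, ∀ t ∈ Ioo (0 : ℝ) 1, |volterraSource c γ N v t| ≤ k t := by
  have hη : 0 < min γ ((1 + δ) / 2) := lt_min hγ (by linarith)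
  obtain ⟨R, hflux⟩ := exists_abs_hypFlux_le (c := c) (γ := γ) (δ := δ)
    (η := min γ ((1 + δ) / 2)) hc (min_le_left _ _) (hδ0.trans hη.le)
    (by linarith [min_le_right γ ((1 + δ) / 2)])
  set η := min γ ((1 + δ) / 2)
  set k : ℝ → ℝ := fun t => R * (1 - t) ^ (η - 1) * B
  have hk : IntervalIntegrable k volume 0 1 := by
    have := ((intervalIntegral.intervalIntegrable_rpow' (a := 1) (b := 0) (r := η - 1)
      (by linarith)).comp_sub_left 1)
    simpa using (this.const_mul R).mul_const B
  have hbound : ∀ v, ∀ t ∈ Ioo (0 : ℝ) 1, |volterraSource c γ N v t| ≤ k t := fun v t ht =>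
    hflux _ B t ⟨ht.1.le, ht.2⟩ fun s hs => by
      simpa only [max_eq_left hs.1] using hN.bound s ⟨hs.1, hs.2.trans_lt ht.2⟩ _ (mem_univ _)
  refine ⟨k, ⟨fun t ht => (abs_nonneg _).trans (hbound 0 t ht), ?_, hk, fun v => ?_, ?_⟩, hbound⟩
  · exact ((((contDiffOn_one_sub_rpow (n := 0) _).continuousOn.mono Ioo_subset_Iio_self).const_smul
      R).mul continuousOn_const)
  · rw [intervalIntegrable_iff_integrableOn_Ioo_of_le zero_le_one] at hk ⊢
    exact hk.mono' (((hN.continuousOn_volterraSource hc v).mono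
      Ioo_subset_Iio_self).aestronglyMeasurable measurableSet_Ioo)
      ((ae_restrict_iff' measurableSet_Ioo).2 (ae_of_all _ (hbound v)))
  · intro v w t ht m hvw
    rw [volterraSource, volterraSource, hypFlux_sub hc (hN.continuousOn_extend v)
      (hN.continuousOn_extend w) ht.2]
    refine (hflux _ (B * m) t ⟨ht.1.le, ht.2⟩ fun s hs => ?_).trans_eq (by ring)
    have hs1 : s ∈ Ico (0 : ℝ) 1 := ⟨hs.1, hs.2.trans_lt ht.2⟩
    have hpow := mul_nonneg hN.bound_nonneg (rpow_nonneg (sub_pos.2 hs1.2).le δ)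
    simp only [max_eq_left hs.1, IccExtend_of_mem _ _ (Ico_subset_Icc_self hs1)]
    refine (hN.lipschitz s hs1 _ (mem_univ _) _ (mem_univ _)).trans ?_
    exact (mul_le_mul_of_nonneg_left (hvw _ hs.2) hpow).trans_eq (by ring)

theorem exists_isRegularSolution (hN : WeightedLipschitz B δ (fun _ => univ) N) (hc : 0 < c)
    (hγ : 0 < γ) (hδ : -1 < δ) (hδ0 : δ ≤ 0) (a : ℝ) :
    ∃ f, IsRegularSolution c γ (fun t => N t (f t)) f ∧ f 1 = a := by
  obtain ⟨k, hcausal, hk⟩ := hN.exists_causalLipschitz hc hγ hδ hδ0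
  have hbound : ∀ v, |∫ s in (0 : ℝ)..1, volterraSource c γ N v s| ≤ ∫ s in (0 : ℝ)..1, k s :=
    fun v => by
      rw [← Real.norm_eq_abs]
      refine intervalIntegral.norm_integral_le_of_norm_le zero_le_one ?_ hcausal.kernel_integrable
      filter_upwards [Measure.ae_ne volume 1] with s hs1 hs
      exact hk v s ⟨hs.1, hs.2.lt_of_ne hs1⟩
  obtain ⟨A, v, hv, hv1⟩ := hcausal.exists_solution_terminal_eq hbound a
  set f : ℝ → ℝ := fun t => A + ∫ s in (0 : ℝ)..t, volterraSource c γ N v s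
  have hcont := hN.continuousOn_volterraSource (γ := γ) hc v
  refine ⟨f, ⟨(continuousOn_integral_Icc (hcausal.integrable v)).const_add A, fun t ht => ?_⟩,
    (hv 1).symm.trans hv1⟩
  have hflux : hypFlux c γ (fun t => N t (f t)) t = volterraSource c γ N v t :=
    hypFlux_congr (fun s hs => by
      have hs1 : s ∈ Icc (0 : ℝ) 1 := ⟨hs.1, hs.2.trans ht.2.le⟩
      simp only [max_eq_left hs.1, IccExtend_of_mem _ _ hs1, hv, f]) ht.1
  rw [hflux]
  exact (intervalIntegral.integral_hasDerivAt_right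
    (intervalIntegrable_of_mem_Icc (hcausal.integrable v) (Ico_subset_Icc_self ht))
    (hcont.stronglyMeasurableAtFilter isOpen_Iio t ht.2)
    (hcont.continuousAt (Iio_mem_nhds ht.2))).const_add A

theorem clip (hN : WeightedLipschitz B δ (fun t => Icc (φ t) (ψ t)) N)
    (hφ : ContinuousOn φ (Icc 0 1)) (hψ : ContinuousOn ψ (Icc 0 1))
    (hφψ : ∀ t ∈ Icc (0 : ℝ) 1, φ t ≤ ψ t) :
    WeightedLipschitz B δ (fun _ => univ) fun t y => N t (max (φ t) (min y (ψ t))) where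
  continuousOn := by
    have hfst : MapsTo Prod.fst (Ico (0 : ℝ) 1 ×ˢ (univ : Set ℝ)) (Icc 0 1) :=
      fun q hq => Ico_subset_Icc_self hq.1
    exact hN.continuousOn.comp (f := fun q : ℝ × ℝ => (q.1, max (φ q.1) (min q.2 (ψ q.1))))
      (continuousOn_fst.prodMk ((hφ.comp continuousOn_fst hfst).sup
        (continuousOn_snd.inf (hψ.comp continuousOn_fst hfst)))) fun q hq => ⟨hq.1, mem_univ _⟩
  bound t ht y _ := hN.bound t ht _
    ⟨le_max_left _ _, max_le (hφψ t (Ico_subset_Icc_self ht)) (min_le_right _ _)⟩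
  lipschitz t ht y _ z _ := by
    have hmem : ∀ x, max (φ t) (min x (ψ t)) ∈ Icc (φ t) (ψ t) := fun x =>
      ⟨le_max_left _ _, max_le (hφψ t (Ico_subset_Icc_self ht)) (min_le_right _ _)⟩
    have hweight : 0 ≤ B * (1 - t) ^ δ :=
      (abs_nonneg _).trans (hN.bound t ht _ (hmem y))
    refine (hN.lipschitz t ht _ (hmem y) _ (hmem z)).trans
      (mul_le_mul_of_nonneg_left ?_ hweight)
    have hmax := abs_max_sub_max_le_max (φ t) (min y (ψ t)) (φ t) (min z (ψ t))
    have hmin := abs_min_sub_min_le_max y (ψ t) z (ψ t)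
    rw [sub_self, abs_zero, max_eq_right (abs_nonneg (min y (ψ t) - min z (ψ t)))] at hmax
    rw [sub_self, abs_zero, max_eq_left (abs_nonneg (y - z))] at hmin
    exact hmax.trans hmin

theorem exists_isRegularSolution_between
    (hN : WeightedLipschitz B δ (fun t => Icc (φ t) (ψ t)) N) (hc : 0 < c) (hγ : 0 < γ)
    (hδ : -1 < δ) (hδ0 : δ ≤ 0) (hφ : InHypDomain φ) (hψ : InHypDomain ψ)
    (hφψ : ∀ t ∈ Icc (0 : ℝ) 1, φ t ≤ ψ t)
    (hsub : ∀ t ∈ Ico (0 : ℝ) 1, N t (φ t) < hypOp c γ φ t)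
    (hsuper : ∀ t ∈ Ico (0 : ℝ) 1, hypOp c γ ψ t < N t (ψ t)) {a : ℝ} (ha : a ∈ Icc (φ 1) (ψ 1)) :
    ∃ f, IsRegularSolution c γ (fun t => N t (f t)) f ∧
      ∀ t ∈ Icc (0 : ℝ) 1, f t ∈ Icc (φ t) (ψ t) := by
  have hclip := hN.clip hφ.continuousOn hψ.continuousOn hφψ
  obtain ⟨f, hf, hf1⟩ := hclip.exists_isRegularSolution hc hγ hδ hδ0 a
  have hcont := hclip.continuousOn_comp (hf.continuousOn.mono Ico_subset_Icc_self)
  have hdom := hf.inHypDomain hc hcont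
  have hbetween : ∀ t ∈ Icc (0 : ℝ) 1, f t ∈ Icc (φ t) (ψ t) := fun t ht => by
    refine ⟨le_of_hypOp_lt (γ := γ) hc hφ hdom (hf1.symm ▸ ha.1) (fun s hs hlt => ?_) t ht,
      le_of_hypOp_lt (γ := γ) hc hdom hψ (hf1.symm ▸ ha.2) (fun s hs hlt => ?_) t ht⟩
    · rw [hf.hypOp_eq hc hcont hs, max_eq_left ((min_le_left _ _).trans hlt.le)]
      exact hsub s hs
    · rw [hf.hypOp_eq hc hcont hs, min_eq_right hlt.le,
        max_eq_right (hφψ s (Ico_subset_Icc_self hs))]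
      exact hsuper s hs
  refine ⟨f, ⟨hf.continuousOn, fun t ht => ?_⟩, hbetween⟩
  rw [hypFlux_congr (G₂ := fun s => N s (max (φ s) (min (f s) (ψ s)))) (fun s hs => ?_) ht.1]
  · exact hf.hasDerivAt t ht
  · have hs := hbetween s ⟨hs.1, hs.2.trans ht.2.le⟩
    simp only [min_eq_left hs.2, max_eq_right hs.1]

end WeightedLipschitz

end Existence

section Barriers

variable {b c e γ β p K L C M t : ℝ} {F : ℝ → ℝ}

theorem inHypDomain_of_contDiffOn {f : ℝ → ℝ} (hcont : ContinuousOn f (Icc 0 1))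
    (hf : ContDiffOn ℝ 2 f (Iio 1)) : InHypDomain f where
  continuousOn := hcont
  differentiableAt t ht := (hf.differentiableOn two_ne_zero).differentiableAt (Iio_mem_nhds ht.2)
  differentiableAt_deriv t ht :=
    ((hf.deriv_of_isOpen isOpen_Iio (m := 1) (by norm_num)).differentiableOn
      one_ne_zero).differentiableAt (Iio_mem_nhds ht.2)

theorem inHypDomain_comp_one_sub_rpow (hF : ContDiff ℝ 2 F) (he : 0 ≤ e) :
    InHypDomain fun t => F ((1 - t) ^ e) :=
  inHypDomain_of_contDiffOn
    (hF.continuous.comp ((continuous_const.sub continuous_id).rpow_const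
      fun _ => .inr he)).continuousOn
    (hF.comp_contDiffOn (contDiffOn_one_sub_rpow e))

theorem hypOp_comp_one_sub_rpow (hF : ContDiff ℝ 2 F) (ht : t < 1) :
    hypOp c γ (fun s => F ((1 - s) ^ e)) t =
      e ^ 2 * t * (1 - t) * ((1 - t) ^ (e - 1)) ^ 2 * deriv (deriv F) ((1 - t) ^ e) -
        e * (1 - t) ^ (e - 1) * (c * (1 - t) + (γ - e) * t) * deriv F ((1 - t) ^ e) := by
  have hF' : ContDiff ℝ 1 (deriv F) := hF.iterate_deriv' 1 1
  have hderiv : ∀ s < 1, HasDerivAt (fun s => F ((1 - s) ^ e))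
      (deriv F ((1 - s) ^ e) * (-e * (1 - s) ^ (e - 1))) s := fun s hs =>
    ((hF.differentiable two_ne_zero _).hasDerivAt).comp s (hasDerivAt_one_sub_rpow e hs)
  have heq : deriv (fun s => F ((1 - s) ^ e)) =ᶠ[𝓝 t]
      fun s => deriv F ((1 - s) ^ e) * (-e * (1 - s) ^ (e - 1)) := by
    filter_upwards [Iio_mem_nhds ht] with s hs using (hderiv s hs).deriv
  have hderiv₂ : HasDerivAt (fun s => deriv F ((1 - s) ^ e) * (-e * (1 - s) ^ (e - 1))) _ t :=
    (((hF'.differentiable one_ne_zero _).hasDerivAt).comp t (hasDerivAt_one_sub_rpow e ht)).mul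
      ((hasDerivAt_one_sub_rpow (e - 1) ht).const_mul (-e))
  have hq : (1 - t) ^ (e - 1) = (1 - t) ^ (e - 1 - 1) * (1 - t) := by
    rw [rpow_sub_one (sub_pos.2 ht).ne' (e - 1), div_mul_cancel₀ _ (sub_pos.2 ht).ne']
  rw [hypOp, heq.deriv_eq, (hderiv t ht).deriv, hderiv₂.deriv, hq, Function.comp_apply]
  ring

theorem exp_neg_mul_one_sub_rpow_mem_Icc (he : 0 ≤ e) (hL : 0 ≤ L) (ht : t ∈ Icc (0 : ℝ) 1) :
    exp (-L * (1 - t) ^ e) ∈ Icc (exp (-L)) 1 := by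
  have hpow_nonneg : 0 ≤ (1 - t) ^ e := rpow_nonneg (sub_nonneg.2 ht.2) e
  have hpow_le : (1 - t) ^ e ≤ 1 := rpow_le_one (sub_nonneg.2 ht.2) (sub_le_self 1 ht.1) he
  exact ⟨exp_le_exp.2 (by nlinarith), exp_le_one_iff.2 (by nlinarith)⟩

theorem const_mul_one_add_rpow_mem_Icc (he : 0 ≤ e) (hC : 0 ≤ C) (ht : t ∈ Icc (0 : ℝ) 1) :
    C * (1 + (1 - t) ^ e) ∈ Icc C (2 * C) := by
  have hpow_nonneg : 0 ≤ (1 - t) ^ e := rpow_nonneg (sub_nonneg.2 ht.2) e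
  have hpow_le : (1 - t) ^ e ≤ 1 := rpow_le_one (sub_nonneg.2 ht.2) (sub_le_self 1 ht.1) he
  constructor <;> nlinarith

theorem le_hypOp_exp (hb : b ≤ c) (hbγ : b ≤ γ - e) (he : 0 ≤ e) (hL : 0 ≤ L)
    (ht : t ∈ Ico (0 : ℝ) 1) :
    L * e * b * (1 - t) ^ (e - 1) * exp (-L * (1 - t) ^ e) ≤
      hypOp c γ (fun s => exp (-L * (1 - s) ^ e)) t := by
  have ht1 : 0 < 1 - t := sub_pos.2 ht.2
  have hderiv : deriv (fun v => exp (-L * v)) = fun v => -L * exp (-L * v) := by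
    ext v
    simpa [mul_comm] using (((hasDerivAt_id v).const_mul (-L)).exp).deriv
  rw [hypOp_comp_one_sub_rpow (F := fun v => exp (-L * v)) (by fun_prop) ht.2, hderiv,
    deriv_const_mul_field, hderiv]
  have hb_le : b ≤ c * (1 - t) + (γ - e) * t := by
    nlinarith [mul_le_mul_of_nonneg_right hb ht1.le, mul_le_mul_of_nonneg_right hbγ ht.1]
  have hmain : L * e * (1 - t) ^ (e - 1) * exp (-L * (1 - t) ^ e) * b ≤
      L * e * (1 - t) ^ (e - 1) * exp (-L * (1 - t) ^ e) * (c * (1 - t) + (γ - e) * t) :=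
    mul_le_mul_of_nonneg_left hb_le (by positivity)
  have hconvex : 0 ≤ e ^ 2 * t * (1 - t) * ((1 - t) ^ (e - 1)) ^ 2 *
      (L ^ 2 * exp (-L * (1 - t) ^ e)) := by
    have := ht.1
    positivity
  linarith

theorem hypOp_const_mul_one_add_rpow_le (hb : b ≤ c) (hbγ : b ≤ γ - e) (he : 0 ≤ e) (hC : 0 ≤ C)
    (ht : t ∈ Ico (0 : ℝ) 1) :
    hypOp c γ (fun s => C * (1 + (1 - s) ^ e)) t ≤ -(C * e * b * (1 - t) ^ (e - 1)) := by
  have ht1 : 0 < 1 - t := sub_pos.2 ht.2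
  have hderiv : deriv (fun v => C * (1 + v)) = fun _ => C := by
    ext v
    simp
  rw [hypOp_comp_one_sub_rpow (F := fun v => C * (1 + v)) (by fun_prop) ht.2, hderiv, deriv_const]
  have hb_le : b ≤ c * (1 - t) + (γ - e) * t := by
    nlinarith [mul_le_mul_of_nonneg_right hb ht1.le, mul_le_mul_of_nonneg_right hbγ ht.1]
  have := mul_le_mul_of_nonneg_left hb_le
    (mul_nonneg (mul_nonneg hC he) (rpow_nonneg ht1.le (e - 1)))
  linarith

theorem exists_lt_rpow_add_mul_rpow (K β : ℝ) (he : e < 1) (hb : 0 < b) :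
    ∃ R, ∀ q ∈ Ioc (0 : ℝ) 1, K < b * q ^ (e - 1) + R * q ^ β := by
  have hlim : Tendsto (fun q : ℝ => b * q ^ (e - 1)) (𝓝[>] 0) atTop :=
    (tendsto_rpow_neg_nhdsGT_zero (by linarith)).const_mul_atTop hb
  obtain ⟨q₀, hq₀, hsmall⟩ := mem_nhdsGT_iff_exists_Ioo_subset.1 (hlim.eventually_gt_atTop K)
  have hcont : ContinuousOn (fun q : ℝ => K * q ^ (-β)) (Icc q₀ 1) :=
    continuousOn_const.mul (continuousOn_id.rpow_const fun q hq => .inl (hq₀.trans_le hq.1).ne')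
  obtain ⟨R, hR⟩ := isCompact_Icc.bddAbove_image hcont
  refine ⟨max R 0, fun q hq => ?_⟩
  have hpow : 0 < q ^ β := rpow_pos_of_pos hq.1 β
  rcases lt_or_ge q q₀ with hlt | hge
  · exact (hsmall ⟨hq.1, hlt⟩).trans_le
      (le_add_of_nonneg_right (mul_nonneg (le_max_right _ _) hpow.le))
  · have hle : K ≤ max R 0 * q ^ β := by
      have : K * q ^ (-β) ≤ max R 0 := (hR ⟨q, ⟨hge, hq.2⟩, rfl⟩).trans (le_max_left R 0)
      rwa [rpow_neg hq.1.le, ← div_eq_mul_inv, div_le_iff₀ hpow] at this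
    exact hle.trans_lt (lt_add_of_pos_left _ (mul_pos hb (rpow_pos_of_pos hq.1 _)))

/-- The right-hand side of the profile equation `4 hypOp c γ f = (1 - t) ^ β f ^ p - K f`, to which
`Δu + (μ / x₁²) u = u ^ p` reduces for homogeneous `u` depending only on `x₁` and `|x|`. -/
noncomputable def profileSource (β p K t y : ℝ) : ℝ :=
  ((1 - t) ^ β * y ^ p - K * y) / 4

theorem profileSource_lt_hypOp_exp (hb : b ≤ c) (hbγ : b ≤ γ - e) (he : 0 ≤ e) (he1 : e ≤ 1)
    (heβ : e ≤ 1 + β) (hp : 1 ≤ p) (hL : 0 ≤ L) (hL1 : 1 + |K| < 4 * (L * e * b))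
    (ht : t ∈ Ico (0 : ℝ) 1) :
    profileSource β p K t (exp (-L * (1 - t) ^ e)) <
      hypOp c γ (fun s => exp (-L * (1 - s) ^ e)) t := by
  refine lt_of_lt_of_le ?_ (le_hypOp_exp hb hbγ he hL ht)
  have ht1 : 0 < 1 - t := sub_pos.2 ht.2
  have ht1' : 1 - t ≤ 1 := sub_le_self _ ht.1
  set φ := exp (-L * (1 - t) ^ e)
  have hφ : 0 < φ := exp_pos _
  have hφ1 : φ ≤ 1 := (exp_neg_mul_one_sub_rpow_mem_Icc he hL (Ico_subset_Icc_self ht)).2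
  have hφp : φ ^ p ≤ φ := by simpa using rpow_le_rpow_of_exponent_ge hφ hφ1 hp
  have hβ : (1 - t) ^ β ≤ (1 - t) ^ (e - 1) :=
    rpow_le_rpow_of_exponent_ge ht1 ht1' (by linarith)
  have hone : 1 ≤ (1 - t) ^ (e - 1) := one_le_rpow_of_pos_of_le_one_of_nonpos ht1 ht1' (by linarith)
  have hpower : (1 - t) ^ β * φ ^ p ≤ (1 - t) ^ (e - 1) * φ := by gcongr
  have hlinear : -(K * φ) ≤ |K| * (1 - t) ^ (e - 1) * φ := by
    rw [← neg_mul]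
    gcongr
    exact (neg_le_abs K).trans (le_mul_of_one_le_right (abs_nonneg K) hone)
  have hstrict := mul_lt_mul_of_pos_right hL1 (mul_pos (one_pos.trans_le hone) hφ)
  rw [profileSource]
  linarith

theorem hypOp_lt_profileSource (hb : b ≤ c) (hbγ : b ≤ γ - e) (hb0 : 0 ≤ b) (he : 0 ≤ e)
    (hp : 1 ≤ p) (hC : 0 < C) (ht : t ∈ Ico (0 : ℝ) 1)
    (hK : K < 2 * (e * b) * (1 - t) ^ (e - 1) + C ^ (p - 1) * (1 - t) ^ β) :
    hypOp c γ (fun s => C * (1 + (1 - s) ^ e)) t <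
      profileSource β p K t (C * (1 + (1 - t) ^ e)) := by
  refine (hypOp_const_mul_one_add_rpow_le hb hbγ he hC.le ht).trans_lt ?_
  have ht1 : 0 < 1 - t := sub_pos.2 ht.2
  set ψ := C * (1 + (1 - t) ^ e)
  obtain ⟨hCψ, hψC⟩ : ψ ∈ Icc C (2 * C) :=
    const_mul_one_add_rpow_mem_Icc he hC.le (Ico_subset_Icc_self ht)
  have hψ : 0 < ψ := hC.trans_le hCψ
  have hpower : C ^ (p - 1) * (1 - t) ^ β * ψ ≤ (1 - t) ^ β * ψ ^ p := by
    calc C ^ (p - 1) * (1 - t) ^ β * ψ ≤ ψ ^ (p - 1) * (1 - t) ^ β * ψ := by gcongr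
      _ = (1 - t) ^ β * ψ ^ p := by
        rw [rpow_sub_one hψ.ne']
        field_simp
  have hflux : 2 * (e * b) * (1 - t) ^ (e - 1) * ψ ≤ 2 * (e * b) * (1 - t) ^ (e - 1) * (2 * C) := by
    gcongr
  have hstrict := mul_lt_mul_of_pos_right hK hψ
  rw [profileSource]
  linarith

theorem abs_rpow_sub_rpow_le (hp : 1 ≤ p) {y z : ℝ} (hy : y ∈ Icc 0 M) (hz : z ∈ Icc 0 M) :
    |y ^ p - z ^ p| ≤ p * M ^ (p - 1) * |y - z| := by
  refine (convex_Icc 0 M).norm_image_sub_le_of_norm_hasDerivWithin_le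
    (fun x _ => (hasDerivAt_rpow_const (.inr hp)).hasDerivWithinAt) (fun x hx => ?_) hz hy
  rw [norm_of_nonneg (by have := rpow_nonneg hx.1 (p - 1); positivity)]
  exact mul_le_mul_of_nonneg_left (rpow_le_rpow hx.1 hx.2 (by linarith)) (by linarith)

theorem WeightedLipschitz.mono {B δ : ℝ} {N : ℝ → ℝ → ℝ} {Y Z : ℝ → Set ℝ}
    (hN : WeightedLipschitz B δ Z N) (hYZ : ∀ t ∈ Ico (0 : ℝ) 1, Y t ⊆ Z t) :
    WeightedLipschitz B δ Y N where
  continuousOn := hN.continuousOn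
  bound t ht y hy := hN.bound t ht y (hYZ t ht hy)
  lipschitz t ht y hy z hz := hN.lipschitz t ht y (hYZ t ht hy) z (hYZ t ht hz)

theorem abs_profileSource_sub_le (hp : 1 ≤ p) (ht : t ∈ Ico (0 : ℝ) 1) {y z : ℝ}
    (hy : y ∈ Icc 0 M) (hz : z ∈ Icc 0 M) :
    |profileSource β p K t y - profileSource β p K t z| ≤
      (p * M ^ (p - 1) + |K|) * (1 - t) ^ min β 0 * |y - z| := by
  have ht1 : 0 < 1 - t := sub_pos.2 ht.2
  have ht1' : 1 - t ≤ 1 := sub_le_self _ ht.1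
  have hβ : (1 - t) ^ β ≤ (1 - t) ^ min β 0 :=
    rpow_le_rpow_of_exponent_ge ht1 ht1' (min_le_left _ _)
  have hone : 1 ≤ (1 - t) ^ min β 0 :=
    one_le_rpow_of_pos_of_le_one_of_nonpos ht1 ht1' (min_le_right _ _)
  have hpower : |(1 - t) ^ β * (y ^ p - z ^ p)| ≤
      (1 - t) ^ min β 0 * (p * M ^ (p - 1) * |y - z|) := by
    rw [abs_mul, abs_of_nonneg (rpow_nonneg ht1.le β)]
    have := abs_rpow_sub_rpow_le hp hy hz
    gcongr
  have hlinear : |K * (y - z)| ≤ |K| * (1 - t) ^ min β 0 * |y - z| := by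
    rw [abs_mul]
    gcongr
    exact le_mul_of_one_le_right (abs_nonneg K) hone
  calc |profileSource β p K t y - profileSource β p K t z|
      = |(1 - t) ^ β * (y ^ p - z ^ p) - K * (y - z)| / 4 := by
        rw [← abs_of_pos (four_pos (α := ℝ)), ← abs_div, profileSource, profileSource]
        ring_nf
    _ ≤ |(1 - t) ^ β * (y ^ p - z ^ p) - K * (y - z)| := div_le_self (abs_nonneg _) (by norm_num)
    _ ≤ |(1 - t) ^ β * (y ^ p - z ^ p)| + |K * (y - z)| := abs_sub _ _
    _ ≤ (p * M ^ (p - 1) + |K|) * (1 - t) ^ min β 0 * |y - z| := by linarith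

theorem weightedLipschitz_profileSource (hp : 1 ≤ p) (hM : 1 ≤ M) :
    WeightedLipschitz ((p * M ^ (p - 1) + |K|) * M) (min β 0) (fun _ => Icc 0 M)
      (profileSource β p K) := by
  have hM0 : 0 ≤ M := zero_le_one.trans hM
  have hB : 0 ≤ p * M ^ (p - 1) + |K| := by positivity
  refine ⟨?_, fun t ht y hy => ?_, fun t ht y hy z hz => ?_⟩
  · have hpow : ContinuousOn (fun q : ℝ × ℝ => (1 - q.1) ^ β) (Ico 0 1 ×ˢ univ) :=
      (continuousOn_const.sub continuousOn_fst).rpow_const fun q hq => .inl (sub_pos.2 hq.1.2).ne'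
    exact ((hpow.mul (continuousOn_snd.rpow_const fun _ _ => .inr (by linarith))).sub
      (continuousOn_const.mul continuousOn_snd)).div_const 4
  · have := abs_profileSource_sub_le (β := β) (K := K) hp ht hy (left_mem_Icc.2 hM0)
    rw [sub_zero, abs_of_nonneg hy.1] at this
    have hzero : profileSource β p K t 0 = 0 := by
      simp [profileSource, zero_rpow (by linarith : p ≠ 0)]
    rw [hzero, sub_zero] at this
    refine this.trans ?_
    have := rpow_nonneg (sub_pos.2 ht.2).le (min β 0)
    rw [mul_right_comm]
    gcongr
    exact hy.2
  · refine (abs_profileSource_sub_le hp ht hy hz).trans ?_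
    have := rpow_nonneg (sub_pos.2 ht.2).le (min β 0)
    gcongr
    exact le_mul_of_one_le_right hB hM

theorem exists_isRegularSolution_profileSource (hc : 0 < c) (hγ : 0 < γ) (hβ : -1 < β)
    (hp : 1 < p) (K : ℝ) :
    ∃ f, IsRegularSolution c γ (fun t => profileSource β p K t (f t)) f ∧
      ∃ m M, 0 < m ∧ ∀ t ∈ Icc (0 : ℝ) 1, f t ∈ Icc m M := by
  obtain ⟨e, he, hlt⟩ := exists_between (lt_min one_pos (lt_min hγ (by linarith : 0 < 1 + β)))
  obtain ⟨he1, heγ, heβ⟩ : e < 1 ∧ e < γ ∧ e < 1 + β := by simpa only [lt_min_iff] using hlt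
  obtain ⟨b, hb0, hb⟩ := exists_between (lt_min hc (sub_pos.2 heγ))
  obtain ⟨hbc, hbγ⟩ := lt_min_iff.1 hb
  obtain ⟨L, hL1⟩ := exists_gt ((1 + |K|) / (4 * (e * b)))
  have hL : 0 < L := lt_of_le_of_lt (by positivity) hL1
  rw [div_lt_iff₀ (by positivity)] at hL1
  obtain ⟨R, hR⟩ := exists_lt_rpow_add_mul_rpow K β he1 (b := 2 * (e * b)) (by positivity)
  obtain ⟨C, hC1, hRC⟩ : ∃ C, 1 ≤ C ∧ R ≤ C ^ (p - 1) :=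
    ((eventually_ge_atTop 1).and
      ((tendsto_rpow_atTop (sub_pos.2 hp)).eventually_ge_atTop R)).exists
  have hφ : ∀ t ∈ Icc (0 : ℝ) 1, exp (-L * (1 - t) ^ e) ∈ Icc (exp (-L)) 1 := fun t ht =>
    exp_neg_mul_one_sub_rpow_mem_Icc he.le hL.le ht
  have hψ : ∀ t ∈ Icc (0 : ℝ) 1, C * (1 + (1 - t) ^ e) ∈ Icc 1 (2 * C) := fun t ht =>
    Icc_subset_Icc_left hC1 (const_mul_one_add_rpow_mem_Icc he.le (by linarith) ht)
  have hN := (weightedLipschitz_profileSource (β := β) (K := K) hp.le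
    (by linarith : 1 ≤ 2 * C)).mono fun t ht =>
      Icc_subset_Icc (exp_pos (-L * (1 - t) ^ e)).le (hψ t (Ico_subset_Icc_self ht)).2
  obtain ⟨f, hf, hbetween⟩ := hN.exists_isRegularSolution_between (c := c) (γ := γ) (a := 1)
    hc hγ (lt_min hβ (by norm_num)) (min_le_right _ _)
    (inHypDomain_comp_one_sub_rpow (F := fun v => exp (-L * v)) (by fun_prop) he.le)
    (inHypDomain_comp_one_sub_rpow (F := fun v => C * (1 + v)) (by fun_prop) he.le)
    (fun t ht => (hφ t ht).2.trans (hψ t ht).1)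
    (fun t => profileSource_lt_hypOp_exp hbc.le (by linarith) he.le he1.le heβ.le hp.le hL.le
      (by linarith))
    (fun t ht => hypOp_lt_profileSource hbc.le (by linarith) hb0.le he.le hp.le (by linarith) ht
      ((hR _ ⟨sub_pos.2 ht.2, sub_le_self _ ht.1⟩).trans_le (by
        have := rpow_nonneg (sub_pos.2 ht.2).le β
        gcongr)))
    ⟨(hφ 1 (right_mem_Icc.2 zero_le_one)).2, (hψ 1 (right_mem_Icc.2 zero_le_one)).1⟩
  exact ⟨f, hf, exp (-L), 2 * C, exp_pos _, fun t ht =>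
    ⟨(hφ t ht).1.trans (hbetween t ht).1, (hbetween t ht).2.trans (hψ t ht).2⟩⟩

end Barriers

section Regularity

variable {c γ β p K t : ℝ} {f G H : ℝ → ℝ}

theorem hasDerivAt_integral_of_continuousOn_Iio (hH : ContinuousOn H (Iio 1)) (A : ℝ) (ht : t < 1) :
    HasDerivAt (fun t => A + ∫ s in (0 : ℝ)..t, H s) (H t) t := by
  have hsub : uIcc 0 t ⊆ Iio 1 := ordConnected_Iio.uIcc_subset (mem_Iio.2 one_pos) ht
  exact (intervalIntegral.integral_hasDerivAt_right (hH.mono hsub).intervalIntegrable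
    (hH.stronglyMeasurableAtFilter isOpen_Iio t ht)
    (hH.continuousAt (Iio_mem_nhds ht))).const_add A

theorem eqOn_integral_of_continuousOn_Iio (hH : ContinuousOn H (Iio 1))
    (hf : ContinuousOn f (Ico 0 1)) (hderiv : ∀ t ∈ Ioo (0 : ℝ) 1, HasDerivAt f (H t) t) :
    EqOn (fun t => f 0 + ∫ s in (0 : ℝ)..t, H s) f (Ico 0 1) := fun t ht => by
  have hsub : Icc 0 t ⊆ Ico (0 : ℝ) 1 := fun s hs => ⟨hs.1, hs.2.trans_lt ht.2⟩
  have hint : IntervalIntegrable H volume 0 t :=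
    (hH.mono (uIcc_of_le ht.1 ▸ hsub.trans Ico_subset_Iio_self)).intervalIntegrable
  have := intervalIntegral.integral_eq_sub_of_hasDerivAt_of_le ht.1 (hf.mono hsub)
    (fun s hs => hderiv s ⟨hs.1, hs.2.trans ht.2⟩) hint
  simp only [this, add_sub_cancel]

theorem exists_contDiffOn_Iio_eqOn (hG : ContDiffOn ℝ 1 G (Ico 0 1)) :
    ∃ H, ContDiffOn ℝ 1 H (Iio 1) ∧ EqOn H G (Ico 0 1) := by
  have hcont := continuousOn_comp_max_zero
    (hG.continuousOn_derivWithin (uniqueDiffOn_Ico 0 1) le_rfl)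
  refine ⟨_, contDiffOn_succ_of_hasDerivAt isOpen_Iio (n := 0) (contDiffOn_zero.2 hcont)
    fun t ht => hasDerivAt_integral_of_continuousOn_Iio hcont (G 0) ht,
    eqOn_integral_of_continuousOn_Iio hcont hG.continuousOn fun t ht => ?_⟩
  rw [max_eq_left ht.1.le]
  exact (hG.differentiableOn one_ne_zero t (Ioo_subset_Ico_self ht)).hasDerivWithinAt.hasDerivAt
    (Ico_mem_nhds ht.1 ht.2)

namespace IsRegularSolution

theorem eqOn_integral_hypFlux (h : IsRegularSolution c γ G f) (hc : 0 < c)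
    (hH : ContinuousOn H (Iio 1)) (hHG : EqOn H G (Ico 0 1)) :
    EqOn (fun t => f 0 + ∫ s in (0 : ℝ)..t, hypFlux c γ H s) f (Ico 0 1) :=
  eqOn_integral_of_continuousOn_Iio (continuousOn_hypFlux hc hH)
    (h.continuousOn.mono Ico_subset_Icc_self) fun t ht => by
      rw [hypFlux_congr (fun s hs => hHG ⟨hs.1, hs.2.trans_lt ht.2⟩) ht.1.le]
      exact h.hasDerivAt t (Ioo_subset_Ico_self ht)

theorem contDiffOn_one (h : IsRegularSolution c γ G f) (hc : 0 < c)
    (hG : ContinuousOn G (Ico 0 1)) : ContDiffOn ℝ 1 f (Ico 0 1) := by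
  have hcont := continuousOn_comp_max_zero hG
  have heq := h.eqOn_integral_hypFlux hc hcont fun t ht => by rw [max_eq_left ht.1]
  have hflux := continuousOn_hypFlux (γ := γ) hc hcont
  exact ((contDiffOn_succ_of_hasDerivAt isOpen_Iio (n := 0) (contDiffOn_zero.2 hflux) fun t ht =>
    hasDerivAt_integral_of_continuousOn_Iio hflux (f 0) ht).mono Ico_subset_Iio_self).congr heq.symm

theorem exists_contDiffOn (h : IsRegularSolution c γ G f) (hc : 0 < c)
    (hG : ContDiffOn ℝ 1 G (Ico 0 1)) :
    ∃ g, ContDiffOn ℝ 2 g (Iio 1) ∧ EqOn g f (Ico 0 1) ∧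
      ∀ t ∈ Ico (0 : ℝ) 1, hypOp c γ g t = G t := by
  obtain ⟨H, hH, hHG⟩ := exists_contDiffOn_Iio_eqOn hG
  have hderiv : ∀ t ∈ Iio (1 : ℝ), HasDerivAt (fun t => f 0 + ∫ s in (0 : ℝ)..t, hypFlux c γ H s)
      (hypFlux c γ H t) t := fun t ht =>
    hasDerivAt_integral_of_continuousOn_Iio (continuousOn_hypFlux hc hH.continuousOn) (f 0) ht
  refine ⟨_, contDiffOn_succ_of_hasDerivAt isOpen_Iio (n := 1) (contDiffOn_hypFlux hc hH) hderiv,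
    h.eqOn_integral_hypFlux hc hH.continuousOn hHG, fun t ht => ?_⟩
  rw [hypOp_eq_of_deriv_eq_hypFlux hc hH.continuousOn (fun s hs => (hderiv s hs.2).deriv) ht,
    hHG ht]

end IsRegularSolution

theorem contDiffOn_profileSource (hf : ContDiffOn ℝ 1 f (Ico 0 1))
    (hpos : ∀ t ∈ Ico (0 : ℝ) 1, 0 < f t) :
    ContDiffOn ℝ 1 (fun t => profileSource β p K t (f t)) (Ico 0 1) :=
  ((((contDiffOn_one_sub_rpow β).mono Ico_subset_Iio_self).mul
    (hf.rpow_const_of_ne fun t ht => (hpos t ht).ne')).sub (contDiffOn_const.mul hf)).div_const 4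

theorem exists_profile (hc : 0 < c) (hγ : 0 < γ) (hβ : -1 < β) (hp : 1 < p) (K : ℝ) :
    ∃ g m M, ContDiffOn ℝ 2 g (Iio 1) ∧ 0 < m ∧ ∀ t ∈ Ico (0 : ℝ) 1,
      g t ∈ Icc m M ∧ 4 * hypOp c γ g t = (1 - t) ^ β * g t ^ p - K * g t := by
  obtain ⟨f, hf, m, M, hm, hbetween⟩ := exists_isRegularSolution_profileSource hc hγ hβ hp K
  have hf_cont : ContinuousOn f (Ico 0 1) := hf.continuousOn.mono Ico_subset_Icc_self
  have hN := weightedLipschitz_profileSource (β := β) (K := K) hp.le le_rfl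
  have hsource := contDiffOn_profileSource (β := β) (p := p) (K := K)
    (hf.contDiffOn_one hc (hN.continuousOn_comp hf_cont))
    fun t ht => hm.trans_le (hbetween t (Ico_subset_Icc_self ht)).1
  obtain ⟨g, hg, hgf, hop⟩ := hf.exists_contDiffOn hc hsource
  refine ⟨g, m, M, hg, hm, fun t ht => ?_⟩
  rw [hop t ht, hgf ht, profileSource, mul_div_cancel₀ _ four_ne_zero]
  exact ⟨hbetween t (Ico_subset_Icc_self ht), rfl⟩

end Regularity

section GradientCalculus

variable {E : Type*} [NormedAddCommGroup E] [NormedSpace ℝ E] {f g : E → ℝ} {φ : ℝ → ℝ} {x : E}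

theorem eventually_differentiableAt (hf : ContDiffAt ℝ 2 f x) :
    ∀ᶠ y in 𝓝 x, DifferentiableAt ℝ f y :=
  (hf.eventually (by simp)).mono fun _ hy => hy.differentiableAt two_ne_zero

theorem hasFDerivAt_fderiv (hf : ContDiffAt ℝ 2 f x) :
    HasFDerivAt (fderiv ℝ f) (fderiv ℝ (fderiv ℝ f) x) x :=
  ((hf.fderiv_right (m := 1) (by norm_num)).differentiableAt one_ne_zero).hasFDerivAt

theorem fderiv_fderiv_mul_apply (hf : ContDiffAt ℝ 2 f x) (hg : ContDiffAt ℝ 2 g x) (v : E) :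
    fderiv ℝ (fderiv ℝ fun y => f y * g y) x v v =
      fderiv ℝ (fderiv ℝ f) x v v * g x + 2 * (fderiv ℝ f x v * fderiv ℝ g x v) +
        f x * fderiv ℝ (fderiv ℝ g) x v v := by
  have heq : fderiv ℝ (fun y => f y * g y) =ᶠ[𝓝 x]
      fun y => f y • fderiv ℝ g y + g y • fderiv ℝ f y := by
    filter_upwards [eventually_differentiableAt hf, eventually_differentiableAt hg] with y hfy hgy
      using fderiv_fun_mul hfy hgy
  have hderiv := ((hf.differentiableAt two_ne_zero).hasFDerivAt.fun_smul
    (hasFDerivAt_fderiv hg)).fun_add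
      ((hg.differentiableAt two_ne_zero).hasFDerivAt.fun_smul (hasFDerivAt_fderiv hf))
  rw [heq.fderiv_eq, hderiv.fderiv]
  simp only [add_apply, smul_apply, ContinuousLinearMap.smulRight_apply, smul_eq_mul]
  ring

theorem fderiv_comp_apply (hφ : DifferentiableAt ℝ φ (f x)) (hf : DifferentiableAt ℝ f x) :
    fderiv ℝ (fun y => φ (f y)) x = deriv φ (f x) • fderiv ℝ f x :=
  (hφ.hasDerivAt.comp_hasFDerivAt x hf.hasFDerivAt).fderiv

theorem fderiv_fderiv_comp_apply (hφ : ContDiffAt ℝ 2 φ (f x)) (hf : ContDiffAt ℝ 2 f x) (v : E) :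
    fderiv ℝ (fderiv ℝ fun y => φ (f y)) x v v =
      deriv (deriv φ) (f x) * (fderiv ℝ f x v * fderiv ℝ f x v) +
        deriv φ (f x) * fderiv ℝ (fderiv ℝ f) x v v := by
  have heq : fderiv ℝ (fun y => φ (f y)) =ᶠ[𝓝 x] fun y => deriv φ (f y) • fderiv ℝ f y := by
    filter_upwards [eventually_differentiableAt hf,
      hf.continuousAt.eventually (eventually_differentiableAt hφ)] with y hfy hφy
      using fderiv_comp_apply hφy hfy
  have hφ' : HasDerivAt (deriv φ) (deriv (deriv φ) (f x)) (f x) :=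
    ((hφ.derivWithin (m := 1) (by norm_num)).differentiableAt one_ne_zero).hasDerivAt
  have hderiv : HasFDerivAt (fun y => deriv φ (f y) • fderiv ℝ f y) _ x :=
    (hφ'.comp_hasFDerivAt x (hf.differentiableAt two_ne_zero).hasFDerivAt).fun_smul
      (hasFDerivAt_fderiv hf)
  rw [heq.fderiv_eq, hderiv.fderiv]
  simp only [Function.comp_apply, add_apply, smul_apply, ContinuousLinearMap.smulRight_apply,
    smul_eq_mul]
  ring

end GradientCalculus

section Laplacian

variable {n : ℕ} {f g h : EuclideanSpace ℝ (Fin n) → ℝ} {φ : ℝ → ℝ} {x : EuclideanSpace ℝ (Fin n)}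

/-- The carré du champ `∇f · ∇g` of the Laplacian, in coordinates. -/
noncomputable def gradInner (f g : EuclideanSpace ℝ (Fin n) → ℝ) (x : EuclideanSpace ℝ (Fin n)) :
    ℝ :=
  ∑ i, fderiv ℝ f x (EuclideanSpace.single i 1) * fderiv ℝ g x (EuclideanSpace.single i 1)

theorem lap_eq_sum_fderiv_fderiv (f : EuclideanSpace ℝ (Fin n) → ℝ) (x : EuclideanSpace ℝ (Fin n)) :
    lap f x = ∑ i, fderiv ℝ (fderiv ℝ f) x (EuclideanSpace.single i 1)
      (EuclideanSpace.single i 1) := by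
  simp only [lap, iteratedFDeriv_two_apply, Matrix.cons_val_zero, Matrix.cons_val_one]

theorem gradInner_comm (f g : EuclideanSpace ℝ (Fin n) → ℝ) (x : EuclideanSpace ℝ (Fin n)) :
    gradInner f g x = gradInner g f x := by
  simp only [gradInner, mul_comm]

theorem gradInner_mul_right (hg : DifferentiableAt ℝ g x) (hh : DifferentiableAt ℝ h x) :
    gradInner f (fun y => g y * h y) x = g x * gradInner f h x + h x * gradInner f g x := by
  simp only [gradInner, fderiv_fun_mul hg hh, add_apply, smul_apply, smul_eq_mul,
    Finset.mul_sum, ← Finset.sum_add_distrib]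
  exact Finset.sum_congr rfl fun _ _ => by ring

theorem gradInner_comp_right (hφ : DifferentiableAt ℝ φ (g x)) (hg : DifferentiableAt ℝ g x) :
    gradInner f (fun y => φ (g y)) x = deriv φ (g x) * gradInner f g x := by
  simp only [gradInner, fderiv_comp_apply hφ hg, smul_apply, smul_eq_mul, Finset.mul_sum]
  exact Finset.sum_congr rfl fun _ _ => by ring

theorem lap_mul (hf : ContDiffAt ℝ 2 f x) (hg : ContDiffAt ℝ 2 g x) :
    lap (fun y => f y * g y) x = lap f x * g x + 2 * gradInner f g x + f x * lap g x := by
  simp only [lap_eq_sum_fderiv_fderiv, gradInner, fderiv_fderiv_mul_apply hf hg,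
    Finset.sum_add_distrib, Finset.mul_sum, Finset.sum_mul]

theorem lap_comp (hφ : ContDiffAt ℝ 2 φ (f x)) (hf : ContDiffAt ℝ 2 f x) :
    lap (fun y => φ (f y)) x =
      deriv (deriv φ) (f x) * gradInner f f x + deriv φ (f x) * lap f x := by
  simp only [lap_eq_sum_fderiv_fderiv, gradInner, fderiv_fderiv_comp_apply hφ hf,
    Finset.sum_add_distrib, Finset.mul_sum]

theorem pos_of_mem_halfSpace (hx : x ∈ halfSpace n) : 0 < n := by
  by_contra hn
  exact (show 0 < x1 x from hx).ne' (dif_neg hn)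

theorem x1_eq_proj (hn : 0 < n) :
    (x1 : EuclideanSpace ℝ (Fin n) → ℝ) = EuclideanSpace.proj (𝕜 := ℝ) ⟨0, hn⟩ := by
  ext x
  simp [x1, hn]

theorem fderiv_x1 (hn : 0 < n) :
    fderiv ℝ (x1 : EuclideanSpace ℝ (Fin n) → ℝ) = fun _ => EuclideanSpace.proj ⟨0, hn⟩ := by
  ext1 x
  rw [x1_eq_proj hn]
  exact (EuclideanSpace.proj (𝕜 := ℝ) (⟨0, hn⟩ : Fin n)).fderiv

theorem fderiv_norm_sq_single (x : EuclideanSpace ℝ (Fin n)) (i : Fin n) :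
    fderiv ℝ (fun y => ‖y‖ ^ 2) x (EuclideanSpace.single i 1) = 2 * x i := by
  simp [fderiv_norm_sq_apply, EuclideanSpace.inner_single_right]

theorem lap_x1 (hn : 0 < n) : lap x1 x = 0 := by
  simp [lap_eq_sum_fderiv_fderiv, fderiv_x1 hn]

theorem gradInner_x1_x1 (hn : 0 < n) : gradInner x1 x1 x = 1 := by
  simp [gradInner, fderiv_x1 hn]

theorem gradInner_x1_norm_sq (hn : 0 < n) : gradInner x1 (fun y => ‖y‖ ^ 2) x = 2 * x1 x := by
  simp only [gradInner, fderiv_norm_sq_single, fderiv_x1 hn]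
  simp [x1, hn]

theorem gradInner_norm_sq_norm_sq :
    gradInner (fun y => ‖y‖ ^ 2) (fun y => ‖y‖ ^ 2) x = 4 * ‖x‖ ^ 2 := by
  simp only [gradInner, fderiv_norm_sq_single]
  rw [EuclideanSpace.real_norm_sq_eq, Finset.mul_sum]
  exact Finset.sum_congr rfl fun i _ => by ring

theorem fderiv_fderiv_norm_sq_apply (x v : EuclideanSpace ℝ (Fin n)) :
    fderiv ℝ (fderiv ℝ fun y => ‖y‖ ^ 2) x v v = 2 * ‖v‖ ^ 2 := by
  have hgrad : (fun y => fderiv ℝ (fun y => ‖y‖ ^ 2) y v) = (2 • innerSL ℝ v : _ →L[ℝ] ℝ) := by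
    ext y
    simp [fderiv_norm_sq_apply, real_inner_comm]
  have happly := (hasFDerivAt_fderiv (contDiff_norm_sq ℝ).contDiffAt).clm_apply
    (hasFDerivAt_const v x)
  rw [hgrad] at happly
  simpa using DFunLike.congr_fun (happly.unique (2 • innerSL ℝ v).hasFDerivAt) v

theorem lap_norm_sq : lap (fun y => ‖y‖ ^ 2) x = 2 * n := by
  simp [lap_eq_sum_fderiv_fderiv, fderiv_fderiv_norm_sq_apply, mul_comm]

end Laplacian

section AxialPower

variable {n : ℕ} {α α' m m' p r : ℝ} {x : EuclideanSpace ℝ (Fin n)}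

/-- The homogeneous axially symmetric function `x₁ ^ α |x| ^ (-2 m)` on the half-space; for
`(α, m) = (2, 1)` it is the squared cosine of the angle between `x` and the `x₁`-axis. -/
noncomputable def axialPower (α m : ℝ) (x : EuclideanSpace ℝ (Fin n)) : ℝ :=
  x1 x ^ α * (‖x‖ ^ 2) ^ (-m)

theorem contDiff_x1 {k : WithTop ℕ∞} :
    ContDiff ℝ k (x1 : EuclideanSpace ℝ (Fin n) → ℝ) := by
  rcases n.eq_zero_or_pos with rfl | hn
  · have hzero : (x1 : EuclideanSpace ℝ (Fin 0) → ℝ) = fun _ => 0 := by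
      ext x
      simp [x1]
    rw [hzero]
    exact contDiff_const
  · rw [x1_eq_proj hn]
    exact (EuclideanSpace.proj (𝕜 := ℝ) (⟨0, hn⟩ : Fin n)).contDiff

theorem x1_sq_le_norm_sq : x1 x ^ 2 ≤ ‖x‖ ^ 2 := by
  rcases n.eq_zero_or_pos with rfl | hn
  · simp [x1]
  · rw [x1_eq_proj hn, EuclideanSpace.real_norm_sq_eq]
    exact Finset.single_le_sum (f := fun i => x i ^ 2) (fun i _ => sq_nonneg _) (Finset.mem_univ _)

theorem norm_pos_of_mem_halfSpace (hx : x ∈ halfSpace n) : 0 < ‖x‖ :=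
  norm_pos_iff.2 fun h => ((pow_pos hx 2).trans_le x1_sq_le_norm_sq).ne' (by simp [h])

theorem norm_sq_pos_of_mem_halfSpace (hx : x ∈ halfSpace n) : 0 < ‖x‖ ^ 2 :=
  pow_pos (norm_pos_of_mem_halfSpace hx) 2

theorem axialPower_pos (hx : x ∈ halfSpace n) : 0 < axialPower α m x :=
  mul_pos (rpow_pos_of_pos hx α) (rpow_pos_of_pos (norm_sq_pos_of_mem_halfSpace hx) _)

theorem axialPower_mul (hx : x ∈ halfSpace n) :
    axialPower α m x * axialPower α' m' x = axialPower (α + α') (m + m') x := by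
  rw [axialPower, axialPower, axialPower, neg_add, rpow_add hx,
    rpow_add (norm_sq_pos_of_mem_halfSpace hx)]
  ring

theorem axialPower_rpow (hx : x ∈ halfSpace n) :
    axialPower α m x ^ r = axialPower (r * α) (r * m) x := by
  have ha : 0 < x1 x := hx
  rw [axialPower, axialPower, mul_rpow (rpow_nonneg ha.le _) (rpow_nonneg (sq_nonneg _) _),
    ← rpow_mul ha.le, ← rpow_mul (sq_nonneg _), mul_comm r α, mul_comm r m, neg_mul]

theorem axialPower_two_one : axialPower 2 1 x = x1 x ^ 2 / ‖x‖ ^ 2 := by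
  rw [axialPower, rpow_two, rpow_neg_one, div_eq_mul_inv]

theorem axialPower_two_one_mem (hx : x ∈ halfSpace n) : axialPower 2 1 x ∈ Ioc (0 : ℝ) 1 := by
  refine ⟨axialPower_pos hx, ?_⟩
  rw [axialPower_two_one]
  exact div_le_one_of_le₀ x1_sq_le_norm_sq (sq_nonneg _)

theorem contDiffAt_axialPower (α m : ℝ) (hx : x ∈ halfSpace n) :
    ContDiffAt ℝ 2 (axialPower α m) x :=
  (contDiff_x1.contDiffAt.rpow_const_of_ne (ne_of_gt hx)).mul
    ((contDiff_norm_sq ℝ).contDiffAt.rpow_const_of_ne (norm_sq_pos_of_mem_halfSpace hx).ne')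

theorem axialPower_rpow_of_mul_sub_one_eq (hm : m * (p - 1) = α * (p - 1) / 2 + 1)
    (hx : x ∈ halfSpace n) :
    axialPower α m x ^ p =
      axialPower α m x / ‖x‖ ^ 2 * axialPower 2 1 x ^ (α * (p - 1) / 2) := by
  have hdiv : axialPower α m x / ‖x‖ ^ 2 = axialPower α (m + 1) x := by
    simpa [axialPower, rpow_neg_one, div_eq_mul_inv] using axialPower_mul (α' := 0) (m' := 1) hx
  rw [hdiv, axialPower_rpow hx, axialPower_rpow hx, axialPower_mul hx]
  congr 1 <;> linarith

theorem deriv_rpow_const_eq_div {a : ℝ} (ha : 0 < a) (r : ℝ) :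
    deriv (fun y => y ^ r) a = a ^ r * (r / a) := by
  rw [Real.deriv_rpow_const, rpow_sub_one ha.ne']
  ring

theorem deriv_deriv_rpow_const {a : ℝ} (ha : 0 < a) (r : ℝ) :
    deriv (deriv fun y => y ^ r) a = a ^ r * (r * (r - 1) / a ^ 2) := by
  rw [Real.deriv_rpow_const', deriv_const_mul_field, deriv_rpow_const_eq_div ha,
    rpow_sub_one ha.ne']
  field_simp

theorem gradInner_axialPower_right (f : EuclideanSpace ℝ (Fin n) → ℝ) (hx : x ∈ halfSpace n) :
    gradInner f (axialPower α m) x = axialPower α m x *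
      (α / x1 x * gradInner f x1 x - m / ‖x‖ ^ 2 * gradInner f (fun y => ‖y‖ ^ 2) x) := by
  have ha : 0 < x1 x := hx
  have hb := norm_sq_pos_of_mem_halfSpace hx
  have hx1 : DifferentiableAt ℝ x1 x := contDiff_x1.contDiffAt.differentiableAt one_ne_zero
  have hnorm : DifferentiableAt ℝ (fun y => ‖y‖ ^ 2) x :=
    (contDiff_norm_sq ℝ).contDiffAt.differentiableAt one_ne_zero
  have hpow₁ := differentiableAt_rpow_const_of_ne α ha.ne'
  have hpow₂ := differentiableAt_rpow_const_of_ne (-m) hb.ne'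
  have hmul := gradInner_mul_right (f := f) (hpow₁.comp x hx1) (hpow₂.comp x hnorm)
  simp only [Function.comp_def] at hmul
  change gradInner f (fun y => x1 y ^ α * (‖y‖ ^ 2) ^ (-m)) x = _
  rw [hmul, gradInner_comp_right hpow₁ hx1, gradInner_comp_right hpow₂ hnorm,
    deriv_rpow_const_eq_div ha, deriv_rpow_const_eq_div hb, axialPower]
  ring

theorem gradInner_axialPower_axialPower (hx : x ∈ halfSpace n) :
    gradInner (axialPower α m) (axialPower α' m') x = axialPower α m x * axialPower α' m' x *
      (α * α' / x1 x ^ 2 - (2 * (α * m' + α' * m) - 4 * m * m') / ‖x‖ ^ 2) := by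
  have ha : x1 x ≠ 0 := ne_of_gt hx
  have hb : ‖x‖ ≠ 0 := (norm_pos_of_mem_halfSpace hx).ne'
  have hn := pos_of_mem_halfSpace hx
  rw [gradInner_axialPower_right _ hx, gradInner_comm _ x1, gradInner_comm _ fun y => ‖y‖ ^ 2,
    gradInner_axialPower_right _ hx, gradInner_axialPower_right _ hx, gradInner_x1_x1 hn,
    gradInner_comm _ x1, gradInner_x1_norm_sq hn, gradInner_norm_sq_norm_sq]
  field_simp
  ring

theorem lap_axialPower (hx : x ∈ halfSpace n) :
    lap (axialPower α m) x = axialPower α m x *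
      (α * (α - 1) / x1 x ^ 2 + 2 * m * (2 * m + 2 - 2 * α - n) / ‖x‖ ^ 2) := by
  have ha : 0 < x1 x := hx
  have hb := norm_sq_pos_of_mem_halfSpace hx
  have hn := pos_of_mem_halfSpace hx
  have hx1 : ContDiffAt ℝ 2 x1 x := contDiff_x1.contDiffAt
  have hnorm : ContDiffAt ℝ 2 (fun y => ‖y‖ ^ 2) x := (contDiff_norm_sq ℝ).contDiffAt
  have hpow₁ : ContDiffAt ℝ 2 (fun y : ℝ => y ^ α) (x1 x) := contDiffAt_rpow_const_of_ne ha.ne'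
  have hpow₂ : ContDiffAt ℝ 2 (fun y : ℝ => y ^ (-m)) (‖x‖ ^ 2) :=
    contDiffAt_rpow_const_of_ne hb.ne'
  have hmul := lap_mul (hpow₁.comp x hx1) (hpow₂.comp x hnorm)
  simp only [Function.comp_def] at hmul
  change lap (fun y => x1 y ^ α * (‖y‖ ^ 2) ^ (-m)) x = _
  rw [hmul, lap_comp hpow₁ hx1, lap_comp hpow₂ hnorm,
    gradInner_comp_right (hpow₂.differentiableAt two_ne_zero) (hnorm.differentiableAt two_ne_zero),
    gradInner_comm (fun y => x1 y ^ α),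
    gradInner_comp_right (hpow₁.differentiableAt two_ne_zero) (hx1.differentiableAt two_ne_zero),
    gradInner_comm (fun y => ‖y‖ ^ 2) x1, lap_x1 hn, lap_norm_sq, gradInner_x1_x1 hn,
    gradInner_x1_norm_sq hn,
    gradInner_norm_sq_norm_sq, deriv_deriv_rpow_const ha, deriv_deriv_rpow_const hb,
    deriv_rpow_const_eq_div ha, deriv_rpow_const_eq_div hb, axialPower]
  field_simp
  ring

theorem gradInner_axialPower_two_one (hx : x ∈ halfSpace n) :
    gradInner (axialPower α m) (axialPower 2 1) x =
      axialPower α m x / ‖x‖ ^ 2 * (2 * α * (1 - axialPower 2 1 x)) := by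
  have ha : x1 x ≠ 0 := ne_of_gt hx
  rw [gradInner_axialPower_axialPower hx, axialPower_two_one]
  field_simp
  ring

theorem gradInner_axialPower_two_one_self (hx : x ∈ halfSpace n) :
    gradInner (axialPower 2 1) (axialPower 2 1) x =
      4 * axialPower 2 1 x * (1 - axialPower 2 1 x) / ‖x‖ ^ 2 := by
  rw [gradInner_axialPower_two_one hx]
  ring

theorem lap_axialPower_two_one (hx : x ∈ halfSpace n) :
    lap (axialPower 2 1) x = 2 * (1 - n * axialPower 2 1 x) / ‖x‖ ^ 2 := by
  have ha : x1 x ≠ 0 := ne_of_gt hx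
  rw [lap_axialPower hx, axialPower_two_one]
  field_simp
  ring

end AxialPower

section Ansatz

variable {n : ℕ} {α m p : ℝ} {g : ℝ → ℝ} {x : EuclideanSpace ℝ (Fin n)}

/-- The axially symmetric function of homogeneity `α - 2 m` with angular profile `g`. The profile is
a function of the squared sine of the angle to the `x₁`-axis, so that the axis is `0` and the
boundary of the half-space is `1`. -/
noncomputable def homogeneousAnsatz (α m : ℝ) (g : ℝ → ℝ) (x : EuclideanSpace ℝ (Fin n)) : ℝ :=
  axialPower α m x * g (1 - axialPower 2 1 x)

theorem one_sub_axialPower_mem (hx : x ∈ halfSpace n) : 1 - axialPower 2 1 x ∈ Ico (0 : ℝ) 1 :=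
  have hS := axialPower_two_one_mem hx
  ⟨sub_nonneg.2 hS.2, sub_lt_self 1 hS.1⟩

theorem contDiffAt_profile_comp (hg : ContDiffOn ℝ 2 g (Iio 1)) (hx : x ∈ halfSpace n) :
    ContDiffAt ℝ 2 (fun s => g (1 - s)) (axialPower 2 1 x) :=
  (hg.contDiffAt (Iio_mem_nhds (one_sub_axialPower_mem hx).2)).comp _
    (contDiffAt_const.sub contDiffAt_id)

theorem contDiffOn_homogeneousAnsatz (hg : ContDiffOn ℝ 2 g (Iio 1)) :
    ContDiffOn ℝ 2 (homogeneousAnsatz α m g) (halfSpace n) := fun x hx =>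
  ((contDiffAt_axialPower α m hx).mul ((contDiffAt_profile_comp hg hx).comp x
    (contDiffAt_axialPower 2 1 hx))).contDiffWithinAt

theorem lap_homogeneousAnsatz (hg : ContDiffOn ℝ 2 g (Iio 1)) (hx : x ∈ halfSpace n) :
    lap (homogeneousAnsatz α m g) x + α * (1 - α) / x1 x ^ 2 * homogeneousAnsatz α m g x =
      axialPower α m x / ‖x‖ ^ 2 *
        (4 * hypOp ((n - 1) / 2) (1 / 2 - α) g (1 - axialPower 2 1 x) +
          2 * m * (2 * m + 2 - 2 * α - n) * g (1 - axialPower 2 1 x)) := by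
  have hS := contDiffAt_axialPower 2 1 hx
  have hgS := contDiffAt_profile_comp hg hx
  have hmul := lap_mul (contDiffAt_axialPower α m hx) (hgS.comp x hS)
  simp only [Function.comp_def] at hmul
  have hderiv : deriv (fun s => g (1 - s)) = fun s => -deriv g (1 - s) := by
    ext s
    exact deriv_comp_const_sub g 1 s
  have hderiv₂ : deriv (deriv fun s => g (1 - s)) = fun s => deriv (deriv g) (1 - s) := by
    ext s
    rw [hderiv, deriv.fun_neg, deriv_comp_const_sub, neg_neg]
  have hu : (homogeneousAnsatz α m g : EuclideanSpace ℝ (Fin n) → ℝ) =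
    fun y => axialPower α m y * g (1 - axialPower 2 1 y) := rfl
  rw [hu, hmul, lap_comp hgS hS,
    gradInner_comp_right (hgS.differentiableAt two_ne_zero) (hS.differentiableAt two_ne_zero),
    lap_axialPower hx, gradInner_axialPower_two_one hx, gradInner_axialPower_two_one_self hx,
    lap_axialPower_two_one hx, hderiv₂, hderiv, hypOp]
  field_simp
  ring

theorem homogeneousAnsatz_pos (hx : x ∈ halfSpace n) (hpos : 0 < g (1 - axialPower 2 1 x)) :
    0 < homogeneousAnsatz α m g x :=
  mul_pos (axialPower_pos hx) hpos

theorem homogeneousAnsatz_solves (hm : m * (p - 1) = α * (p - 1) / 2 + 1)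
    (hg : ContDiffOn ℝ 2 g (Iio 1)) (hx : x ∈ halfSpace n) (hpos : 0 < g (1 - axialPower 2 1 x))
    (hode : 4 * hypOp ((n - 1) / 2) (1 / 2 - α) g (1 - axialPower 2 1 x) =
      axialPower 2 1 x ^ (α * (p - 1) / 2) * g (1 - axialPower 2 1 x) ^ p -
        2 * m * (2 * m + 2 - 2 * α - n) * g (1 - axialPower 2 1 x)) :
    lap (homogeneousAnsatz α m g) x + α * (1 - α) / x1 x ^ 2 * homogeneousAnsatz α m g x =
      homogeneousAnsatz α m g x ^ p := by
  rw [lap_homogeneousAnsatz hg hx, hode, homogeneousAnsatz,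
    mul_rpow (axialPower_pos hx).le hpos.le, axialPower_rpow_of_mul_sub_one_eq hm hx]
  ring

theorem homogeneousAnsatz_mem_Icc {a b : ℝ} (hx : x ∈ halfSpace n) (ha : 0 < a)
    (hmem : g (1 - axialPower 2 1 x) ∈ Icc a b) :
    homogeneousAnsatz α m g x ∈
      Icc ((max b a⁻¹)⁻¹ * axialPower α m x) (max b a⁻¹ * axialPower α m x) := by
  have hpos : 0 ≤ axialPower α m x := (axialPower_pos hx).le
  have hinv : (max b a⁻¹)⁻¹ ≤ a := inv_le_of_inv_le₀ ha (le_max_right b a⁻¹)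
  rw [homogeneousAnsatz, mul_comm (axialPower α m x)]
  exact ⟨mul_le_mul_of_nonneg_right (hinv.trans hmem.1) hpos,
    mul_le_mul_of_nonneg_right (hmem.2.trans (le_max_left b a⁻¹)) hpos⟩

theorem axialPower_eq_mul_norm_rpow {s : ℝ} (hs : s = -2 * m) :
    axialPower α m x = x1 x ^ α * ‖x‖ ^ s := by
  rw [axialPower, ← rpow_two, ← rpow_mul (norm_nonneg x), hs, mul_neg, neg_mul]

end Ansatz

section Exponent

variable {μ p : ℝ}

theorem aMinus_mul_one_sub (hμ : μ ≤ 1 / 4) : aMinus μ * (1 - aMinus μ) = μ := by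
  have hsq : √(1 / 4 - μ) ^ 2 = 1 / 4 - μ := sq_sqrt (sub_nonneg.2 hμ)
  rw [aMinus]
  linear_combination -hsq

theorem aMinus_lt_half (hμ : μ < 1 / 4) : aMinus μ < 1 / 2 :=
  sub_lt_self _ (sqrt_pos.2 (sub_pos.2 hμ))

theorem neg_one_lt_aMinus_mul (hμ : μ < 1 / 4) (hp : 1 < p) (hKO : μ < 0 → p < 1 - 2 / aMinus μ) :
    -1 < aMinus μ * (p - 1) / 2 := by
  have hroot := aMinus_mul_one_sub hμ.le
  rcases lt_or_ge (aMinus μ) 0 with hneg | hnonneg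
  · have hlt : p - 1 < 2 / (-aMinus μ) := by
      rw [div_neg]
      linarith [hKO (hroot ▸ mul_neg_of_neg_of_pos hneg (by linarith))]
    rw [lt_div_iff₀ (neg_pos.2 hneg)] at hlt
    linarith
  · have : 0 ≤ aMinus μ * (p - 1) := mul_nonneg hnonneg (sub_nonneg.2 hp.le)
    linarith

end Exponent

/-- for `1 < p < p_KO` (where `p_KO = ∞` if `0 ≤ μ < 1/4` and
`p_KO = 1 − 2/α₋` if `μ < 0`) there exists a positive classical solution of
`Δu + (μ/x₁²)u = u^p` on the half-space with
`c⁻¹ x₁^{α₋} |x|^{−α₋−2/(p−1)} ≤ u ≤ c x₁^{α₋} |x|^{−α₋−2/(p−1)}`. -/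
theorem stmt3 (n : ℕ) (hn : 2 ≤ n) (μ p : ℝ) (hμ : μ < 1 / 4) (hp1 : 1 < p)
    (hKO : μ < 0 → p < 1 - 2 / aMinus μ) :
    ∃ c > (0 : ℝ), ∃ u : EuclideanSpace ℝ (Fin n) → ℝ,
      ContDiffOn ℝ 2 u (halfSpace n) ∧
      (∀ x ∈ halfSpace n, 0 < u x) ∧
      (∀ x ∈ halfSpace n, lap u x + (μ / (x1 x) ^ 2) * u x = u x ^ p) ∧
      (∀ x ∈ halfSpace n,
        c⁻¹ * x1 x ^ aMinus μ * ‖x‖ ^ (-(aMinus μ) - 2 / (p - 1)) ≤ u x ∧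
        u x ≤ c * x1 x ^ aMinus μ * ‖x‖ ^ (-(aMinus μ) - 2 / (p - 1))) := by
  have hn' : (2 : ℝ) ≤ n := by exact_mod_cast hn
  set α := aMinus μ
  set m := α / 2 + 1 / (p - 1) with hm
  have hscale : m * (p - 1) = α * (p - 1) / 2 + 1 := by
    have : p - 1 ≠ 0 := (sub_pos.2 hp1).ne'
    rw [hm]
    field_simp
  obtain ⟨g, a, b, hg, ha, hprofile⟩ := exists_profile (c := ((n : ℝ) - 1) / 2) (by linarith)
    (sub_pos.2 (aMinus_lt_half hμ)) (neg_one_lt_aMinus_mul hμ hp1 hKO) hp1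
    (2 * m * (2 * m + 2 - 2 * α - n))
  have hat x (hx : x ∈ halfSpace n) := hprofile _ (one_sub_axialPower_mem hx)
  have hpos x (hx : x ∈ halfSpace n) : 0 < g (1 - axialPower 2 1 x) := ha.trans_le (hat x hx).1.1
  refine ⟨max b a⁻¹, lt_max_of_lt_right (inv_pos.2 ha), homogeneousAnsatz α m g,
    contDiffOn_homogeneousAnsatz hg, fun x hx => homogeneousAnsatz_pos hx (hpos x hx),
    fun x hx => ?_, fun x hx => ?_⟩
  · rw [← homogeneousAnsatz_solves hscale hg hx (hpos x hx)
      (by simpa only [sub_sub_cancel] using (hat x hx).2), aMinus_mul_one_sub hμ.le]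
  · rw [mul_assoc, mul_assoc, ← axialPower_eq_mul_norm_rpow (m := m) (by rw [hm]; ring)]
    exact homogeneousAnsatz_mem_Icc hx ha (hat x hx).1
end

section
/- Let n ≥ 2, μ < 0 and p > p_KO := 1 − 2/α₋ (note α₋ < 0, so p_KO > 1). Then there is no positive classical solution u of Δu + (μ/x₁²)u = u^p on ℝⁿ₊ satisfying, for some c > 0, c⁻¹ x₁^{α₋} |x|^{−α₋−2/(p−1)} ≤ u(x) ≤ c x₁^{α₋} |x|^{−α₋−2/(p−1)} for all x ∈ ℝⁿ₊. -/
open Real Set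

/-!
The potential term is nonpositive, so a solution satisfies `u ^ p ≤ Δu`, and the Keller–Osserman
estimate bounds it by a multiple of `x₁ ^ (-2 / (p - 1))`. The condition `p > p_KO` says exactly
that `x₁ ^ α₋` blows up faster than this at the boundary, so the lower bound fails near every
boundary point other than the origin.

The Keller–Osserman estimate is proved without a barrier. Pick `y` in the ball maximizing the
quantity `(r - |y - x|) ^ (2 / (p - 1)) * u y`; then `u` is at most a fixed multiple of `u y` on a
ball around `y` of radius `ρ` comparable to `r - |y - x|`. Subtracting a paraboloid with Laplacian
just below `(u y) ^ p`, the maximum principle gives `(u y) ^ p * ρ ^ 2 ≤ C * u y`.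
-/

open Filter Metric Module Topology
open scoped Laplacian

section MaximumPrinciple

lemma deriv_deriv_nonpos_of_isLocalMax_s4 {f : ℝ → ℝ} {a : ℝ} (hf : ContinuousAt f a)
    (h : IsLocalMax f a) : deriv (deriv f) a ≤ 0 := by
  by_contra! hpos
  have hmin : IsLocalMin f a := isLocalMin_of_deriv_deriv_pos hpos h.deriv_eq_zero hf
  have hconst : f =ᶠ[𝓝 a] fun _ ↦ f a := by
    filter_upwards [h, hmin] with t hle hge using le_antisymm hle hge
  simp [hconst.deriv.deriv_eq] at hpos

lemma iteratedFDeriv_two_nonpos_of_isLocalMax {E : Type*} [NormedAddCommGroup E]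
    [NormedSpace ℝ E] {f : E → ℝ} {y : E} (hf : ContDiffAt ℝ 2 f y) (h : IsLocalMax f y) (v : E) :
    iteratedFDeriv ℝ 2 f y ![v, v] ≤ 0 := by
  let L : ℝ → E := fun t ↦ y + t • v
  have hL0 : L 0 = y := by simp [L]
  have hL (t : ℝ) : HasDerivAt L v t := by
    simpa [L] using ((hasDerivAt_id t).smul_const v).const_add y
  have hLy : Tendsto L (𝓝 0) (𝓝 y) := hL0 ▸ (hL 0).continuousAt
  have hderiv : deriv (f ∘ L) =ᶠ[𝓝 0] fun t ↦ fderiv ℝ f (L t) v := by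
    filter_upwards [hLy.eventually (hf.eventually (by simp))] with t ht
    exact ((ht.differentiableAt (by simp)).hasFDerivAt.comp_hasDerivAt t (hL t)).deriv
  have hderiv₂ : HasDerivAt (fun t ↦ fderiv ℝ f (L t) v) (fderiv ℝ (fderiv ℝ f) y v v) 0 := by
    have hdiff : DifferentiableAt ℝ (fderiv ℝ f) (L 0) :=
      hL0 ▸ (hf.fderiv_right (m := 1) (by norm_num)).differentiableAt (by simp)
    simpa [hL0] using (hdiff.hasFDerivAt.comp_hasDerivAt 0 (hL 0)).clm_apply (hasDerivAt_const 0 v)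
  have hmax : IsLocalMax (f ∘ L) 0 := by
    filter_upwards [hLy.eventually h] with t ht
    simpa [hL0] using ht
  have hcont : ContinuousAt (f ∘ L) 0 :=
    ContinuousAt.comp (hL0 ▸ hf.continuousAt) (hL 0).continuousAt
  simpa [iteratedFDeriv_two_apply, hderiv.deriv_eq, hderiv₂.deriv] using
    deriv_deriv_nonpos_of_isLocalMax_s4 hcont hmax

variable {E : Type*} [NormedAddCommGroup E] [InnerProductSpace ℝ E]

lemma contDiff_norm_sub_sq (x : E) : ContDiff ℝ 2 fun z ↦ ‖z - x‖ ^ 2 :=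
  (contDiff_id.sub contDiff_const).norm_sq ℝ

variable [FiniteDimensional ℝ E]

lemma laplacian_nonpos_of_isLocalMax {f : E → ℝ} {y : E} (hf : ContDiffAt ℝ 2 f y)
    (h : IsLocalMax f y) : Δ f y ≤ 0 := by
  rw [InnerProductSpace.laplacian_eq_iteratedFDeriv_stdOrthonormalBasis]
  exact Finset.sum_nonpos fun i _ ↦ iteratedFDeriv_two_nonpos_of_isLocalMax hf h _

lemma laplacian_norm_sub_sq (x y : E) : Δ (fun z ↦ ‖z - x‖ ^ 2) y = 2 * finrank ℝ E := by
  let L : E →L[ℝ] E →L[ℝ] ℝ := 2 • innerSL ℝ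
  have hL (v : E) : L v v = 2 * ‖v‖ ^ 2 := by
    rw [← real_inner_self_eq_norm_sq, two_mul, ← two_nsmul]
    rfl
  have hderiv : fderiv ℝ (fun z : E ↦ ‖z - x‖ ^ 2) = fun z ↦ L (z - x) := by
    ext1 z
    rw [fderiv_comp_sub (f := fun z ↦ ‖z‖ ^ 2), fderiv_norm_sq_apply]
    rfl
  have hderiv₂ : fderiv ℝ (fderiv ℝ fun z : E ↦ ‖z - x‖ ^ 2) y = L := by
    rw [hderiv, fderiv_comp_sub (f := L), L.fderiv]
  simp [InnerProductSpace.laplacian_eq_iteratedFDeriv_stdOrthonormalBasis,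
    iteratedFDeriv_two_apply, hderiv₂, hL, mul_comm]

lemma exists_mem_sphere_add_mul_sq_le {u : E → ℝ} {x : E} {r A : ℝ} (hr : 0 ≤ r) (hA : 0 ≤ A)
    (hc : ContinuousOn u (closedBall x r)) (hu : ContDiffOn ℝ 2 u (ball x r))
    (hΔ : ∀ y ∈ ball x r, u x ≤ u y → 2 * finrank ℝ E * A < Δ u y) :
    ∃ y ∈ sphere x r, u x + A * r ^ 2 ≤ u y := by
  let q : E → ℝ := A • fun z ↦ ‖z - x‖ ^ 2
  have hq : ContDiff ℝ 2 q := contDiff_const.smul (contDiff_norm_sub_sq x)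
  have hΔq (y : E) : Δ q y = 2 * finrank ℝ E * A := by
    rw [InnerProductSpace.laplacian_smul, laplacian_norm_sub_sq, smul_eq_mul, mul_comm]
    exact (contDiff_norm_sub_sq x).contDiffAt
  obtain ⟨y, hy, hmax⟩ := (isCompact_closedBall x r).exists_isMaxOn ⟨x, mem_closedBall_self hr⟩
    (hc.sub hq.continuous.continuousOn)
  have hxy : u x + A * ‖y - x‖ ^ 2 ≤ u y := by
    simpa [q, le_sub_iff_add_le] using hmax (mem_closedBall_self hr)
  have hsphere : y ∈ sphere x r := by
    by_contra hns
    have hyb : y ∈ ball x r := lt_of_le_of_ne hy hns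
    have huy : ContDiffAt ℝ 2 u y := hu.contDiffAt (isOpen_ball.mem_nhds hyb)
    have hnonpos : Δ (u - q) y ≤ 0 :=
      laplacian_nonpos_of_isLocalMax (huy.sub hq.contDiffAt)
        (hmax.isLocalMax (closedBall_mem_nhds_of_mem hyb))
    rw [huy.laplacian_sub hq.contDiffAt, hΔq] at hnonpos
    have := hΔ y hyb (le_trans (le_add_of_nonneg_right (by positivity)) hxy)
    linarith
  exact ⟨y, hsphere, by rwa [← mem_sphere_iff_norm.1 hsphere]⟩

end MaximumPrinciple

section KellerOsserman

lemma exists_doubling_ball {X : Type*} [PseudoMetricSpace X] [ProperSpace X] {u : X → ℝ} {x : X}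
    {r β : ℝ} (hr : 0 < r) (hβ : 0 < β) (hc : ContinuousOn u (closedBall x r)) (hx : 0 < u x) :
    ∃ y ρ, 0 < ρ ∧ closedBall y ρ ⊆ ball x r ∧ r ^ β * u x ≤ (2 * ρ) ^ β * u y ∧
      ∀ z ∈ closedBall y ρ, u z ≤ 2 ^ β * u y := by
  have hcont : ContinuousOn (fun z ↦ (r - dist z x) ^ β * u z) (closedBall x r) :=
    ContinuousOn.mul (Continuous.continuousOn <|
      (continuous_const.sub (continuous_id.dist continuous_const)).rpow_const
        fun _ ↦ .inr hβ.le) hc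
  obtain ⟨y, hy, hmax⟩ := (isCompact_closedBall x r).exists_isMaxOn
    ⟨x, mem_closedBall_self hr.le⟩ hcont
  have hxy : r ^ β * u x ≤ (r - dist y x) ^ β * u y := by
    simpa using hmax (mem_closedBall_self hr.le)
  have hyr : 0 < r - dist y x := by
    refine (sub_nonneg.2 hy).lt_of_ne' fun h0 ↦ ?_
    rw [h0, Real.zero_rpow hβ.ne', zero_mul] at hxy
    exact hxy.not_gt (by positivity)
  obtain ⟨ρ, hρ⟩ : ∃ ρ, r - dist y x = 2 * ρ := ⟨(r - dist y x) / 2, by ring⟩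
  rw [hρ] at hxy hyr
  have hρ0 : 0 < ρ := by linarith
  have huy : 0 < u y := pos_of_mul_pos_right ((by positivity : 0 < r ^ β * u x).trans_le hxy)
    (by positivity)
  have hdist {z : X} (hz : z ∈ closedBall y ρ) : ρ ≤ r - dist z x := by
    linarith [dist_triangle z y x, mem_closedBall.1 hz]
  have hsub : closedBall y ρ ⊆ ball x r := fun z hz ↦ mem_ball.2 (by linarith [hdist hz])
  refine ⟨y, ρ, hρ0, hsub, hxy, fun z hz ↦ ?_⟩
  rcases le_or_gt (u z) 0 with huz | huz
  · exact huz.trans (by positivity)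
  refine le_of_mul_le_mul_left (a := ρ ^ β) ?_ (by positivity)
  calc ρ ^ β * u z ≤ (r - dist z x) ^ β * u z := by gcongr; exact hdist hz
    _ ≤ (2 * ρ) ^ β * u y := hρ ▸ hmax (ball_subset_closedBall (hsub hz))
    _ = ρ ^ β * (2 ^ β * u y) := by rw [Real.mul_rpow zero_le_two hρ0.le]; ring

variable {E : Type*} [NormedAddCommGroup E] [InnerProductSpace ℝ E] [FiniteDimensional ℝ E]

lemma rpow_mul_sq_le_of_rpow_le_laplacian {u : E → ℝ} {x : E} {r p M : ℝ} (hr : 0 ≤ r)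
    (hp : 0 ≤ p) (hc : ContinuousOn u (closedBall x r)) (hu : ContDiffOn ℝ 2 u (ball x r))
    (hx : 0 < u x) (hsub : ∀ y ∈ ball x r, 0 < u y → u y ^ p ≤ Δ u y)
    (hM : ∀ y ∈ sphere x r, u y ≤ M) :
    u x ^ p * r ^ 2 ≤ (2 * finrank ℝ E + 1) * M := by
  let A := u x ^ p / (2 * finrank ℝ E + 1)
  have hA0 : 0 < A := by unfold A; positivity
  have hAu : (2 * finrank ℝ E + 1) * A = u x ^ p := by unfold A; field_simp
  obtain ⟨y, hy, hle⟩ := exists_mem_sphere_add_mul_sq_le hr hA0.le hc hu fun y hy hxy ↦ calc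
    2 * finrank ℝ E * A < u x ^ p := by linarith
    _ ≤ u y ^ p := by gcongr
    _ ≤ Δ u y := hsub y hy (hx.trans_le hxy)
  calc u x ^ p * r ^ 2 = (2 * finrank ℝ E + 1) * (A * r ^ 2) := by rw [← hAu]; ring
    _ ≤ (2 * finrank ℝ E + 1) * M := by gcongr; linarith [hM y hy]

/-- The constant in the Keller–Osserman estimate for `u ^ p ≤ Δ u` in dimension `d`. It is explicit,
though not sharp, so that its independence of `u` and of the ball is visible. -/
noncomputable def kellerOssermanConst (d : ℕ) (p : ℝ) : ℝ :=
  2 ^ (2 / (p - 1)) * ((2 * d + 1) * 2 ^ (2 / (p - 1))) ^ (1 / (p - 1))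

theorem le_kellerOssermanConst_mul_rpow {u : E → ℝ} {x : E} {r p : ℝ} (hr : 0 < r) (hp : 1 < p)
    (hc : ContinuousOn u (closedBall x r)) (hu : ContDiffOn ℝ 2 u (ball x r))
    (hsub : ∀ y ∈ ball x r, 0 < u y → u y ^ p ≤ Δ u y) :
    u x ≤ kellerOssermanConst (finrank ℝ E) p * r ^ (-(2 / (p - 1))) := by
  have hp' : 0 < p - 1 := sub_pos.2 hp
  unfold kellerOssermanConst
  generalize hβ : 2 / (p - 1) = β
  generalize hD : (2 * finrank ℝ E + 1 : ℝ) = D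
  have hβ0 : 0 < β := by rw [← hβ]; positivity
  have hD0 : 0 < D := by rw [← hD]; positivity
  rcases le_or_gt (u x) 0 with hx | hx
  · exact hx.trans (by positivity)
  obtain ⟨y, ρ, hρ, hyx, hxy, hdouble⟩ := exists_doubling_ball hr hβ0 hc hx
  have huy : 0 < u y := pos_of_mul_pos_right ((by positivity : 0 < r ^ β * u x).trans_le hxy)
    (by positivity)
  have hball : ball y ρ ⊆ ball x r := ball_subset_closedBall.trans hyx
  have hmax : u y ^ p * ρ ^ 2 ≤ D * (2 ^ β * u y) := hD ▸
    rpow_mul_sq_le_of_rpow_le_laplacian hρ.le (by positivity)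
      (hc.mono (hyx.trans ball_subset_closedBall)) (hu.mono hball) huy
      (fun z hz ↦ hsub z (hball hz)) fun z hz ↦ hdouble z (sphere_subset_closedBall hz)
  have hpow : u y ^ (p - 1) * ρ ^ 2 ≤ D * 2 ^ β := by
    rw [Real.rpow_sub_one huy.ne']
    calc u y ^ p / u y * ρ ^ 2 = u y ^ p * ρ ^ 2 / u y := by ring
      _ ≤ D * 2 ^ β := by rw [div_le_iff₀ huy]; linarith
  have hscale : ρ ^ β * u y = (u y ^ (p - 1) * ρ ^ 2) ^ (1 / (p - 1)) := by
    rw [Real.mul_rpow (by positivity) (by positivity), ← Real.rpow_mul huy.le,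
      mul_one_div_cancel hp'.ne', Real.rpow_one, ← Real.rpow_natCast_mul hρ.le, ← hβ, mul_comm]
    norm_num [div_eq_mul_inv]
  rw [Real.rpow_neg hr.le, ← div_eq_mul_inv, le_div_iff₀' (by positivity)]
  calc r ^ β * u x ≤ (2 * ρ) ^ β * u y := hxy
    _ = 2 ^ β * (u y ^ (p - 1) * ρ ^ 2) ^ (1 / (p - 1)) := by
      rw [← hscale, Real.mul_rpow zero_le_two hρ.le, mul_assoc]
    _ ≤ 2 ^ β * (D * 2 ^ β) ^ (1 / (p - 1)) := by gcongr

end KellerOsserman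

section HalfSpace

variable {n : ℕ}

lemma lap_eq_laplacian (u : EuclideanSpace ℝ (Fin n) → ℝ) : lap u = Δ u := by
  simp [InnerProductSpace.laplacian_eq_iteratedFDeriv_orthonormalBasis u
    (EuclideanSpace.basisFun (Fin n) ℝ), funext_iff, lap]

lemma abs_x1_sub_x1_le_dist (x y : EuclideanSpace ℝ (Fin n)) : |x1 x - x1 y| ≤ dist x y := by
  unfold x1
  split_ifs
  · exact dist_eq_norm x y ▸ PiLp.norm_apply_le (x - y) _
  · simp

lemma closedBall_subset_halfSpace {x : EuclideanSpace ℝ (Fin n)} {r : ℝ} (hr : r < x1 x) :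
    closedBall x r ⊆ halfSpace n := fun y hy ↦ by
  have := (abs_le.1 (abs_x1_sub_x1_le_dist y x)).1
  exact (by linarith [mem_closedBall.1 hy] : 0 < x1 y)

lemma exists_x1_eq_and_one_le_norm (hn : 2 ≤ n) (ε : ℝ) :
    ∃ x : EuclideanSpace ℝ (Fin n), x1 x = ε ∧ 1 ≤ ‖x‖ := by
  let x : EuclideanSpace ℝ (Fin n) := .single ⟨0, by lia⟩ ε + .single ⟨1, by lia⟩ 1
  have hnorm : ‖x ⟨1, by lia⟩‖ ≤ ‖x‖ := PiLp.norm_apply_le x _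
  exact ⟨x, by simp [x, x1, show 0 < n by lia], by simpa [x] using hnorm⟩

lemma le_kellerOssermanConst_mul_x1_rpow {u : EuclideanSpace ℝ (Fin n) → ℝ} {p : ℝ} (hp : 1 < p)
    (hu : ContDiffOn ℝ 2 u (halfSpace n)) (hsub : ∀ x ∈ halfSpace n, 0 < u x → u x ^ p ≤ lap u x)
    {x : EuclideanSpace ℝ (Fin n)} (hx : x ∈ halfSpace n) :
    u x ≤ kellerOssermanConst n p * (x1 x / 2) ^ (-(2 / (p - 1))) := by
  have hball : closedBall x (x1 x / 2) ⊆ halfSpace n :=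
    closedBall_subset_halfSpace (half_lt_self hx)
  simpa using le_kellerOssermanConst_mul_rpow (half_pos hx) hp (hu.continuousOn.mono hball)
    (hu.mono (ball_subset_closedBall.trans hball))
    fun y hy ↦ lap_eq_laplacian u ▸ hsub y (hball (ball_subset_closedBall hy))

end HalfSpace

lemma aMinus_neg {μ : ℝ} (hμ : μ < 0) : aMinus μ < 0 := by
  have : 1 / 2 < √(1 / 4 - μ) := Real.lt_sqrt_of_sq_lt (by linarith)
  exact sub_neg.2 this

lemma nonpos_of_forall_le_mul_rpow {c C γ : ℝ} (hγ : 0 < γ) (h : ∀ ε > 0, c ≤ C * ε ^ γ) :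
    c ≤ 0 := by
  have hlim : Tendsto (fun ε : ℝ ↦ C * ε ^ γ) (𝓝[>] 0) (𝓝 0) := by
    have := (Real.continuousAt_rpow_const 0 γ (.inr hγ.le)).tendsto.const_mul C
    rw [Real.zero_rpow hγ.ne', mul_zero] at this
    exact this.mono_left nhdsWithin_le_nhds
  exact ge_of_tendsto hlim (eventually_mem_nhdsWithin.mono h)

theorem stmt4_general (n : ℕ) (hn : 2 ≤ n) (μ p : ℝ) (hμ : μ < 0)
    (hKO : 1 - 2 / aMinus μ < p) :
    ¬ ∃ (u : EuclideanSpace ℝ (Fin n) → ℝ) (c : ℝ), 0 < c ∧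
      ContDiffOn ℝ 2 u (halfSpace n) ∧
      (∀ x ∈ halfSpace n, u x ^ p ≤ lap u x + (μ / (x1 x) ^ 2) * u x) ∧
      (∀ x ∈ halfSpace n,
        c * x1 x ^ aMinus μ * ‖x‖ ^ (-(aMinus μ) - 2 / (p - 1)) ≤ u x) := by
  rintro ⟨u, c, hc, hu, hsub, hlow⟩
  have hα : aMinus μ < 0 := aMinus_neg hμ
  have hp : 1 < p := by linarith [div_neg_of_pos_of_neg two_pos hα]
  have hγ : 0 < -(aMinus μ) - 2 / (p - 1) := by
    have : 2 / -aMinus μ < p - 1 := by rw [div_neg]; linarith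
    exact sub_pos.2 ((div_lt_comm₀ (neg_pos.2 hα) (sub_pos.2 hp)).1 this)
  have hupper {x} (hx : x ∈ halfSpace n) :=
    le_kellerOssermanConst_mul_x1_rpow hp hu (fun y hy hpos ↦ (hsub y hy).trans <|
      add_le_of_nonpos_right <| mul_nonpos_of_nonpos_of_nonneg
        (div_nonpos_of_nonpos_of_nonneg hμ.le (sq_nonneg _)) hpos.le) hx
  generalize aMinus μ = α, 2 / (p - 1) = β at *
  refine (nonpos_of_forall_le_mul_rpow (C := kellerOssermanConst n p * 2 ^ β) hγ
    fun ε hε ↦ ?_).not_gt hc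
  obtain ⟨x, rfl, hx⟩ := exists_x1_eq_and_one_le_norm hn ε
  refine le_of_mul_le_mul_right (a := x1 x ^ α) ?_ (Real.rpow_pos_of_pos hε α)
  calc c * x1 x ^ α ≤ c * x1 x ^ α * ‖x‖ ^ (-α - β) :=
        le_mul_of_one_le_right (by positivity) (Real.one_le_rpow hx hγ.le)
    _ ≤ kellerOssermanConst n p * (x1 x / 2) ^ (-β) := (hlow x hε).trans (hupper hε)
    _ = kellerOssermanConst n p * 2 ^ β * x1 x ^ (-α - β) * x1 x ^ α := by
      rw [mul_assoc _ (_ ^ _) (_ ^ α), ← Real.rpow_add hε, Real.div_rpow hε.le zero_le_two,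
        Real.rpow_neg zero_le_two, div_inv_eq_mul]
      ring_nf

/-- for `μ < 0` and `p > p_KO = 1 − 2/α₋` there is no positive
classical solution of `Δu + (μ/x₁²)u = u^p` on the half-space satisfying
`c⁻¹ x₁^{α₋} |x|^{−α₋−2/(p−1)} ≤ u ≤ c x₁^{α₋} |x|^{−α₋−2/(p−1)}`. -/
theorem stmt4 (n : ℕ) (hn : 2 ≤ n) (μ p : ℝ) (hμ : μ < 0)
    (hKO : 1 - 2 / aMinus μ < p) :
    ¬ ∃ (u : EuclideanSpace ℝ (Fin n) → ℝ) (c : ℝ), 0 < c ∧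
      ContDiffOn ℝ 2 u (halfSpace n) ∧
      (∀ x ∈ halfSpace n, 0 < u x) ∧
      (∀ x ∈ halfSpace n, lap u x + (μ / (x1 x) ^ 2) * u x = u x ^ p) ∧
      (∀ x ∈ halfSpace n,
        c⁻¹ * x1 x ^ aMinus μ * ‖x‖ ^ (-(aMinus μ) - 2 / (p - 1)) ≤ u x ∧
        u x ≤ c * x1 x ^ aMinus μ * ‖x‖ ^ (-(aMinus μ) - 2 / (p - 1))) := by
  rintro ⟨u, c, hc, hu, -, heq, hbd⟩
  exact stmt4_general n hn μ p hμ hKO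
    ⟨u, c⁻¹, inv_pos.2 hc, hu, fun x hx ↦ (heq x hx).ge, fun x hx ↦ (hbd x hx).1⟩
end

section
/- Let n ≥ 2 and −∞ < μ < 1/4. Suppose h is a positive L_μ-harmonic function on ℝⁿ₊ which is axially symmetric, homogeneous of some degree γ ∈ ℝ, and belongs to the class H_{μ,0}: for every R > 1 there exist c > 0 and δ > 0 such that c⁻¹ x₁^{α₊} ≤ h(x) ≤ c x₁^{α₊} whenever R⁻¹ ≤ |x| ≤ R and 0 < x₁ < δ. Then there exists λ > 0 such that either h(x) = λ x₁^{α₊} for all x ∈ ℝⁿ₊, or h(x) = λ x₁^{α₊} |x|^{−(n−2+2α₊)} for all x ∈ ℝⁿ₊. -/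
open Real Set

/-
On the unit half-sphere an axially symmetric homogeneous `L_μ`-harmonic is a function `u` of the
angle `θ` to the axis, and solves a singular Sturm–Liouville equation whose eigenvalue
`γ (γ + n - 2)` is given by the degree; `w = cos^{α₊}` solves it for the degree `α₊`. The flux
`sin^{n-2} θ · w² (u / w)'` vanishes on the axis, and its derivative has the sign of the difference
of the two eigenvalues. If they differed, then, as `∫ dθ / (sin^{n-2} θ w²)` diverges at `π/2`,
`u / w` would tend to `±∞` at the boundary, whereas it is positive and bounded there. Hence the
eigenvalues agree, so `γ` is `α₊` or `-(n - 2 + α₊)`, the flux vanishes, and `u` is a constant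
multiple of `w`.
-/

open Filter Topology
open EuclideanSpace (single)

section SturmLiouville

lemma tendsto_atTop_of_hasDerivAt_le {f g f' g' : ℝ → ℝ} {a b : ℝ} (hab : a < b)
    (hf : ∀ t ∈ Ico a b, HasDerivAt f (f' t) t) (hg : ∀ t ∈ Ico a b, HasDerivAt g (g' t) t)
    (hle : ∀ t ∈ Ico a b, f' t ≤ g' t) (hlim : Tendsto f (𝓝[<] b) atTop) :
    Tendsto g (𝓝[<] b) atTop := by
  have hsub : ∀ t ∈ Ico a b, HasDerivAt (fun s => g s - f s) (g' t - f' t) t :=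
    fun t ht => (hg t ht).sub (hf t ht)
  have hmono : MonotoneOn (fun s => g s - f s) (Ico a b) :=
    monotoneOn_of_hasDerivWithinAt_nonneg (convex_Ico a b)
      (fun t ht => (hsub t ht).continuousAt.continuousWithinAt)
      (fun t ht => (hsub t (interior_subset ht)).hasDerivWithinAt)
      (fun t ht => sub_nonneg.2 (hle t (interior_subset ht)))
  refine tendsto_atTop_mono' _ ?_ (tendsto_atTop_add_const_right _ (g a - f a) hlim)
  filter_upwards [Ioo_mem_nhdsLT hab] with t ht
  linarith [hmono (left_mem_Ico.2 hab) (Ioo_subset_Ico_self ht) ht.1.le]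

lemma eq_of_hasDerivAt_zero_on_interior {D : Set ℝ} (hD : Convex ℝ D) {f : ℝ → ℝ}
    (hf : ContinuousOn f D) (hf' : ∀ t ∈ interior D, HasDerivAt f 0 t) {s t : ℝ} (hs : s ∈ D)
    (ht : t ∈ D) : f s = f t := by
  have hmono : MonotoneOn f D := monotoneOn_of_hasDerivWithinAt_nonneg hD hf
    (fun r hr => (hf' r hr).hasDerivWithinAt) fun _ _ => le_rfl
  have hanti : AntitoneOn f D := antitoneOn_of_hasDerivWithinAt_nonpos hD hf
    (fun r hr => (hf' r hr).hasDerivWithinAt) fun _ _ => le_rfl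
  rcases le_total s t with hst | hts
  · exact (hmono hs ht hst).antisymm (hanti hs ht hst)
  · exact (hanti ht hs hts).antisymm (hmono ht hs hts)

/-- The Wronskian of `w` and `u` with weight `p`, i.e. the flux `p w² (u / w)'` of `u / w`. -/
noncomputable def weightedWronskian (p u w : ℝ → ℝ) (t : ℝ) : ℝ :=
  p t * (w t * deriv u t - deriv w t * u t)

lemma hasDerivAt_weightedWronskian {p u w : ℝ → ℝ} {r q s t : ℝ}
    (hu : DifferentiableAt ℝ u t) (hw : DifferentiableAt ℝ w t)
    (hp : HasDerivAt p (r * p t) t)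
    (hu' : HasDerivAt (deriv u) (-(r * deriv u t + q * u t)) t)
    (hw' : HasDerivAt (deriv w) (-(r * deriv w t + s * w t)) t) :
    HasDerivAt (weightedWronskian p u w) ((s - q) * (p t * w t * u t)) t := by
  refine (hp.mul ((hw.hasDerivAt.mul hu').sub (hw'.mul hu.hasDerivAt))).congr_deriv ?_
  simp only [Pi.mul_apply, Pi.sub_apply]
  ring

lemma hasDerivAt_div_eq_weightedWronskian {p u w : ℝ → ℝ} {t : ℝ}
    (hu : DifferentiableAt ℝ u t) (hw : DifferentiableAt ℝ w t) (hp : p t ≠ 0) (hw0 : w t ≠ 0) :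
    HasDerivAt (fun s => u s / w s) (weightedWronskian p u w t / (p t * w t ^ 2)) t := by
  refine (hu.hasDerivAt.div hw.hasDerivAt hw0).congr_deriv ?_
  rw [weightedWronskian, mul_div_mul_left _ _ hp]
  ring

end SturmLiouville

section AngularEquation

variable {m μ ν κ θ : ℝ} {u w : ℝ → ℝ}

/-- `u` solves the equation
`u'' + m cot θ u' + (ν + μ / cos² θ) u = 0` for the restriction to the unit sphere of `ℝᵐ⁺²` of an
axially symmetric homogeneous `L_μ`-harmonic, as a function of the angle `θ` with the axis;
`ν = γ (γ + m)` for degree `γ`. Smoothness across the axis `θ = 0` is encoded by working on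
`(-π/2, π/2)` with `u' 0 = 0`. -/
structure IsAngularSolution (m μ ν : ℝ) (u : ℝ → ℝ) : Prop where
  contDiffOn : ContDiffOn ℝ 2 u (Ioo (-(π / 2)) (π / 2))
  deriv_zero : deriv u 0 = 0
  deriv_deriv : ∀ θ ∈ Ioo 0 (π / 2),
    deriv (deriv u) θ = -(m * cot θ * deriv u θ + (ν + μ / cos θ ^ 2) * u θ)

lemma mem_Ioo_neg_pi_div_two_of_mem_Ico (hθ : θ ∈ Ico 0 (π / 2)) : θ ∈ Ioo (-(π / 2)) (π / 2) :=
  ⟨by linarith [pi_pos, hθ.1], hθ.2⟩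

lemma sin_pos_of_mem_Ioo_zero_pi_div_two (hθ : θ ∈ Ioo 0 (π / 2)) : 0 < sin θ :=
  sin_pos_of_pos_of_lt_pi hθ.1 (by linarith [pi_pos, hθ.2])

lemma cos_pos_of_mem_Ico_zero_pi_div_two (hθ : θ ∈ Ico 0 (π / 2)) : 0 < cos θ :=
  cos_pos_of_mem_Ioo (mem_Ioo_neg_pi_div_two_of_mem_Ico hθ)

lemma hasDerivAt_sin_rpow (hθ : 0 < sin θ) :
    HasDerivAt (fun t => sin t ^ m) (m * cot θ * sin θ ^ m) θ := by
  refine ((hasDerivAt_sin θ).rpow_const (p := m) (Or.inl hθ.ne')).congr_deriv ?_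
  rw [rpow_sub_one hθ.ne', cot_eq_cos_div_sin]
  ring

lemma mul_tan_le_div_sin_rpow_mul {A B c : ℝ} (hm : 0 ≤ m) (hθ : θ ∈ Ioo 0 (π / 2)) (hA : 0 ≤ A)
    (hAB : A ≤ B) (hc : 0 < c) (hcos : c ≤ cos θ) : A * tan θ ≤ B / (sin θ ^ m * c) := by
  have hsin := sin_pos_of_mem_Ioo_zero_pi_div_two hθ
  have hnum : A * sin θ ≤ B := (mul_le_of_le_one_right hA (sin_le_one θ)).trans hAB
  have hden : sin θ ^ m * c ≤ cos θ :=
    (mul_le_of_le_one_left hc.le (rpow_le_one hsin.le (sin_le_one θ) hm)).trans hcos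
  rw [tan_eq_sin_div_cos, ← mul_div_assoc]
  exact div_le_div₀ (hA.trans hAB) hnum (mul_pos (rpow_pos_of_pos hsin m) hc) hden

namespace IsAngularSolution

lemma contDiffAt (hu : IsAngularSolution m μ ν u) (hθ : θ ∈ Ico 0 (π / 2)) :
    ContDiffAt ℝ 2 u θ :=
  hu.contDiffOn.contDiffAt (isOpen_Ioo.mem_nhds (mem_Ioo_neg_pi_div_two_of_mem_Ico hθ))

lemma differentiableAt (hu : IsAngularSolution m μ ν u) (hθ : θ ∈ Ico 0 (π / 2)) :
    DifferentiableAt ℝ u θ :=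
  (hu.contDiffAt hθ).differentiableAt two_ne_zero

lemma differentiableAt_deriv (hu : IsAngularSolution m μ ν u) (hθ : θ ∈ Ico 0 (π / 2)) :
    DifferentiableAt ℝ (deriv u) θ :=
  ((hu.contDiffAt hθ).derivWithin (m := 1) (by norm_num)).differentiableAt one_ne_zero

lemma neg (hu : IsAngularSolution m μ ν u) : IsAngularSolution m μ ν (-u) where
  contDiffOn := hu.contDiffOn.neg
  deriv_zero := by rw [deriv.neg, hu.deriv_zero, neg_zero]
  deriv_deriv θ hθ := by
    simp only [deriv.neg', deriv.fun_neg, hu.deriv_deriv θ hθ, Pi.neg_apply]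
    ring

lemma hasDerivAt_weightedWronskian (hu : IsAngularSolution m μ ν u)
    (hw : IsAngularSolution m μ κ w) (hθ : θ ∈ Ioo 0 (π / 2)) :
    HasDerivAt (weightedWronskian (sin · ^ m) u w) ((κ - ν) * (sin θ ^ m * w θ * u θ)) θ := by
  have hθ' := Ioo_subset_Ico_self hθ
  have h := _root_.hasDerivAt_weightedWronskian (hu.differentiableAt hθ')
    (hw.differentiableAt hθ') (hasDerivAt_sin_rpow (sin_pos_of_mem_Ioo_zero_pi_div_two hθ))
    (hu.deriv_deriv θ hθ ▸ (hu.differentiableAt_deriv hθ').hasDerivAt)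
    (hw.deriv_deriv θ hθ ▸ (hw.differentiableAt_deriv hθ').hasDerivAt)
  exact h.congr_deriv (by ring)

lemma continuousOn_weightedWronskian (hm : 0 ≤ m) (hu : IsAngularSolution m μ ν u)
    (hw : IsAngularSolution m μ κ w) :
    ContinuousOn (weightedWronskian (sin · ^ m) u w) (Ico 0 (π / 2)) := fun _ hθ =>
  ((continuous_sin.rpow_const fun _ => Or.inr hm).continuousAt.mul
    (((hw.differentiableAt hθ).continuousAt.mul (hu.differentiableAt_deriv hθ).continuousAt).sub
      ((hw.differentiableAt_deriv hθ).continuousAt.mul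
        (hu.differentiableAt hθ).continuousAt))).continuousWithinAt

lemma weightedWronskian_zero (hu : IsAngularSolution m μ ν u) (hw : IsAngularSolution m μ κ w) :
    weightedWronskian (sin · ^ m) u w 0 = 0 := by
  simp [weightedWronskian, hu.deriv_zero, hw.deriv_zero]

lemma strictMonoOn_weightedWronskian (hm : 0 ≤ m) (hu : IsAngularSolution m μ ν u)
    (hw : IsAngularSolution m μ κ w) (hwpos : ∀ θ ∈ Ico 0 (π / 2), 0 < w θ)
    (hupos : ∀ θ ∈ Ico 0 (π / 2), 0 < (κ - ν) * u θ) :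
    StrictMonoOn (weightedWronskian (sin · ^ m) u w) (Ico 0 (π / 2)) := by
  refine strictMonoOn_of_deriv_pos (convex_Ico _ _) (hu.continuousOn_weightedWronskian hm hw) ?_
  intro θ hθ
  rw [interior_Ico] at hθ
  have hsin : 0 < sin θ ^ m := rpow_pos_of_pos (sin_pos_of_mem_Ioo_zero_pi_div_two hθ) m
  rw [(hu.hasDerivAt_weightedWronskian hw hθ).deriv, mul_left_comm]
  exact mul_pos (mul_pos hsin (hwpos θ (Ioo_subset_Ico_self hθ)))
    (hupos θ (Ioo_subset_Ico_self hθ))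

-- The divergence of `u / w` comes from `∫ dθ / (sinᵐ θ w²) ≥ ∫ tan θ dθ = ∞`.
lemma tendsto_div_atTop (hm : 0 ≤ m) (hu : IsAngularSolution m μ ν u)
    (hw : IsAngularSolution m μ κ w) (hwpos : ∀ θ ∈ Ico 0 (π / 2), 0 < w θ)
    (hwcos : ∀ θ ∈ Ico 0 (π / 2), w θ ^ 2 ≤ cos θ)
    (hupos : ∀ θ ∈ Ico 0 (π / 2), 0 < (κ - ν) * u θ) :
    Tendsto (u / w) (𝓝[<] (π / 2)) atTop := by
  have hpi := pi_pos
  set W := weightedWronskian (sin · ^ m) u w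
  have hW : StrictMonoOn W (Ico 0 (π / 2)) :=
    hu.strictMonoOn_weightedWronskian hm hw hwpos hupos
  have hquarter : π / 4 ∈ Ico 0 (π / 2) := ⟨by linarith, by linarith⟩
  have hWpos : 0 < W (π / 4) :=
    (hu.weightedWronskian_zero hw).symm.trans_lt
      (hW (left_mem_Ico.2 pi_div_two_pos) hquarter (by linarith))
  have hIoo : ∀ θ ∈ Ico (π / 4) (π / 2), θ ∈ Ioo 0 (π / 2) :=
    fun θ hθ => ⟨by linarith [hθ.1], hθ.2⟩
  refine tendsto_atTop_of_hasDerivAt_le (f := fun θ => W (π / 4) * -log (cos θ))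
    (f' := fun θ => W (π / 4) * tan θ) (g' := fun θ => W θ / (sin θ ^ m * w θ ^ 2))
    hquarter.2 ?_ ?_ ?_ ?_
  · intro θ hθ
    have hcos := cos_pos_of_mem_Ico_zero_pi_div_two (Ioo_subset_Ico_self (hIoo θ hθ))
    refine (((hasDerivAt_cos θ).log hcos.ne').neg.const_mul _).congr_deriv ?_
    rw [tan_eq_sin_div_cos]
    ring
  · intro θ hθ
    have hθ' := Ioo_subset_Ico_self (hIoo θ hθ)
    exact hasDerivAt_div_eq_weightedWronskian (hu.differentiableAt hθ') (hw.differentiableAt hθ')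
      (rpow_pos_of_pos (sin_pos_of_mem_Ioo_zero_pi_div_two (hIoo θ hθ)) m).ne' (hwpos θ hθ').ne'
  · intro θ hθ
    have hθ' := Ioo_subset_Ico_self (hIoo θ hθ)
    exact mul_tan_le_div_sin_rpow_mul hm (hIoo θ hθ) hWpos.le
      (hW.monotoneOn hquarter hθ' hθ.1) (pow_pos (hwpos θ hθ') 2) (hwcos θ hθ')
  · have hlog : Tendsto (fun θ => log (cos θ)) (𝓝[<] (π / 2)) atBot :=
      tendsto_log_nhdsGT_zero.comp tendsto_cos_pi_div_two
    exact (tendsto_neg_atBot_atTop.comp hlog).const_mul_atTop hWpos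

lemma eigenvalue_eq_of_div_le (hm : 0 ≤ m) (hu : IsAngularSolution m μ ν u)
    (hw : IsAngularSolution m μ κ w) (hupos : ∀ θ ∈ Ico 0 (π / 2), 0 < u θ)
    (hwpos : ∀ θ ∈ Ico 0 (π / 2), 0 < w θ) (hwcos : ∀ θ ∈ Ico 0 (π / 2), w θ ^ 2 ≤ cos θ)
    {c : ℝ} (hc : ∀ᶠ θ in 𝓝[<] (π / 2), u θ / w θ ≤ c) : ν = κ := by
  rcases lt_trichotomy ν κ with hlt | heq | hgt
  · have hlim := hu.tendsto_div_atTop hm hw hwpos hwcos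
      fun t ht => mul_pos (sub_pos.2 hlt) (hupos t ht)
    obtain ⟨θ, hle, hgt⟩ := (hc.and (hlim.eventually_gt_atTop c)).exists
    exact absurd hle hgt.not_ge
  · exact heq
  · have hlim := hu.neg.tendsto_div_atTop hm hw hwpos hwcos
      fun θ hθ => mul_pos_of_neg_of_neg (sub_neg.2 hgt) (neg_neg_of_pos (hupos θ hθ))
    have hnear : ∀ᶠ θ in 𝓝[<] (π / 2), θ ∈ Ioo 0 (π / 2) := Ioo_mem_nhdsLT pi_div_two_pos
    obtain ⟨θ, hθ, hpos⟩ := (hnear.and (hlim.eventually_gt_atTop 0)).exists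
    have hθ' := Ioo_subset_Ico_self hθ
    exact absurd hpos (div_neg_of_neg_of_pos (neg_neg_of_pos (hupos θ hθ')) (hwpos θ hθ')).not_gt

lemma eq_const_mul (hm : 0 ≤ m) (hu : IsAngularSolution m μ ν u) (hw : IsAngularSolution m μ ν w)
    (hwpos : ∀ θ ∈ Ico 0 (π / 2), 0 < w θ) (hθ : θ ∈ Ico 0 (π / 2)) :
    u θ = u 0 / w 0 * w θ := by
  have hzero : (0 : ℝ) ∈ Ico 0 (π / 2) := left_mem_Ico.2 pi_div_two_pos
  have hW : ∀ t ∈ Ico 0 (π / 2), weightedWronskian (sin · ^ m) u w t = 0 := fun t ht => by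
    rw [← hu.weightedWronskian_zero hw]
    refine eq_of_hasDerivAt_zero_on_interior (convex_Ico _ _)
      (hu.continuousOn_weightedWronskian hm hw) (fun s hs => ?_) ht hzero
    rw [interior_Ico] at hs
    exact (hu.hasDerivAt_weightedWronskian hw hs).congr_deriv (by ring)
  have hdiv : u θ / w θ = u 0 / w 0 := by
    refine eq_of_hasDerivAt_zero_on_interior (f := fun t => u t / w t) (convex_Ico 0 (π / 2))
      (fun t ht => ((hu.differentiableAt ht).continuousAt.div (hw.differentiableAt ht).continuousAt
        (hwpos t ht).ne').continuousWithinAt) (fun t ht => ?_) hθ hzero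
    rw [interior_Ico] at ht
    have ht' := Ioo_subset_Ico_self ht
    have hsin : 0 < sin t ^ m := rpow_pos_of_pos (sin_pos_of_mem_Ioo_zero_pi_div_two ht) m
    refine (hasDerivAt_div_eq_weightedWronskian (p := (sin · ^ m)) (hu.differentiableAt ht')
      (hw.differentiableAt ht') hsin.ne' (hwpos t ht').ne').congr_deriv ?_
    rw [hW t ht', zero_div]
  rw [← hdiv, div_mul_cancel₀ _ (hwpos θ hθ).ne']

end IsAngularSolution

lemma hasDerivAt_cos_rpow {α : ℝ} (hθ : 0 < cos θ) :
    HasDerivAt (cos · ^ α) (-(α * tan θ * cos θ ^ α)) θ := by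
  refine ((hasDerivAt_cos θ).rpow_const (p := α) (Or.inl hθ.ne')).congr_deriv ?_
  rw [rpow_sub_one hθ.ne', tan_eq_sin_div_cos]
  ring

lemma deriv_deriv_cos_rpow {α : ℝ} (hθ : 0 < cos θ) :
    deriv (deriv (cos · ^ α)) θ = (α * (α - 1) / cos θ ^ 2 - α ^ 2) * cos θ ^ α := by
  have hderiv : deriv (cos · ^ α) =ᶠ[𝓝 θ] fun t => -(α * tan t * cos t ^ α) := by
    filter_upwards [continuous_cos.continuousAt.eventually (lt_mem_nhds hθ)] with t ht
    exact (hasDerivAt_cos_rpow ht).deriv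
  rw [hderiv.deriv_eq,
    (((hasDerivAt_tan hθ.ne').const_mul α).fun_mul (hasDerivAt_cos_rpow hθ)).fun_neg.deriv,
    tan_eq_sin_div_cos]
  field_simp
  rw [sin_sq]
  ring

lemma isAngularSolution_cos_rpow {α : ℝ} (hα : α ^ 2 - α + μ = 0) :
    IsAngularSolution m μ (α * (α + m)) (cos · ^ α) where
  contDiffOn := contDiff_cos.contDiffOn.rpow_const_of_ne fun _ hθ => (cos_pos_of_mem_Ioo hθ).ne'
  deriv_zero := by simp [(hasDerivAt_cos_rpow (α := α) (cos_zero.symm ▸ one_pos)).deriv]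
  deriv_deriv θ hθ := by
    have hcos := cos_pos_of_mem_Ico_zero_pi_div_two (Ioo_subset_Ico_self hθ)
    have hsin := sin_pos_of_mem_Ioo_zero_pi_div_two hθ
    rw [deriv_deriv_cos_rpow hcos, (hasDerivAt_cos_rpow hcos).deriv, cot_eq_cos_div_sin,
      tan_eq_sin_div_cos, eq_sub_of_add_eq' hα]
    field_simp
    ring

theorem IsAngularSolution.exists_eq_mul_cos_rpow {γ α c : ℝ} (hm : 0 ≤ m) (hα : 1 / 2 ≤ α)
    (hαμ : α ^ 2 - α + μ = 0) (hu : IsAngularSolution m μ (γ * (γ + m)) u)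
    (hupos : ∀ θ ∈ Ico 0 (π / 2), 0 < u θ)
    (hbound : ∀ᶠ θ in 𝓝[<] (π / 2), u θ ≤ c * cos θ ^ α) :
    (γ = α ∨ γ = -(m + α)) ∧ ∃ C > 0, ∀ θ ∈ Ico 0 (π / 2), u θ = C * cos θ ^ α := by
  have hw : IsAngularSolution m μ (α * (α + m)) (cos · ^ α) := isAngularSolution_cos_rpow hαμ
  have hcos := fun θ => cos_pos_of_mem_Ico_zero_pi_div_two (θ := θ)
  have hwpos : ∀ θ ∈ Ico 0 (π / 2), 0 < cos θ ^ α := fun θ hθ => rpow_pos_of_pos (hcos θ hθ) α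
  have hwcos : ∀ θ ∈ Ico 0 (π / 2), (cos θ ^ α) ^ 2 ≤ cos θ := fun θ hθ => by
    rw [← rpow_mul_natCast (hcos θ hθ).le]
    exact rpow_le_self_of_le_one (hcos θ hθ).le (cos_le_one θ) (by push_cast; linarith)
  have hratio : ∀ᶠ θ in 𝓝[<] (π / 2), u θ / cos θ ^ α ≤ c := by
    filter_upwards [hbound, Ioo_mem_nhdsLT pi_div_two_pos] with θ hle hθ
    exact (div_le_iff₀ (hwpos θ (Ioo_subset_Ico_self hθ))).2 hle
  have heigen : γ * (γ + m) = α * (α + m) :=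
    hu.eigenvalue_eq_of_div_le hm hw hupos hwpos hwcos hratio
  have hroots : (γ - α) * (γ + (m + α)) = 0 := by linear_combination heigen
  have hzero : (0 : ℝ) ∈ Ico 0 (π / 2) := left_mem_Ico.2 pi_div_two_pos
  exact ⟨(mul_eq_zero.1 hroots).imp sub_eq_zero.1 eq_neg_of_add_eq_zero_left,
    u 0 / cos 0 ^ α, div_pos (hupos 0 hzero) (hwpos 0 hzero),
    fun θ hθ => (heigen ▸ hu).eq_const_mul hm hw hwpos hθ⟩

end AngularEquation

section CurveDerivatives

variable {E F : Type*} [NormedAddCommGroup E] [NormedSpace ℝ E] [NormedAddCommGroup F]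
  [NormedSpace ℝ F]

lemma deriv_comp_curve {h : E → F} {c : ℝ → E} {v : E} {t : ℝ} (hh : DifferentiableAt ℝ h (c t))
    (hc : HasDerivAt c v t) : deriv (fun s => h (c s)) t = fderiv ℝ h (c t) v :=
  (hh.hasFDerivAt.comp_hasDerivAt t hc).deriv

lemma deriv_deriv_comp_curve {h : E → F} {c v : ℝ → E} {a : E} {t : ℝ}
    (hh : ContDiffAt ℝ 2 h (c t)) (hc : ∀ s, HasDerivAt c (v s) s) (hv : HasDerivAt v a t) :
    deriv (deriv fun s => h (c s)) t =
      fderiv ℝ (fderiv ℝ h) (c t) (v t) (v t) + fderiv ℝ h (c t) a := by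
  have hderiv : (deriv fun s => h (c s)) =ᶠ[𝓝 t] fun s => fderiv ℝ h (c s) (v s) := by
    filter_upwards [(hc t).continuousAt.eventually (hh.eventually (by norm_num))] with s hs
    exact deriv_comp_curve (hs.differentiableAt two_ne_zero) (hc s)
  have hh' : HasFDerivAt (fderiv ℝ h) (fderiv ℝ (fderiv ℝ h) (c t)) (c t) :=
    ((hh.fderiv_right (m := 1) (by norm_num)).differentiableAt one_ne_zero).hasFDerivAt
  rw [hderiv.deriv_eq]
  exact ((hh'.comp_hasDerivAt t (hc t)).clm_apply hv).deriv

section Homogeneous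

variable {h : E → ℝ} {γ : ℝ} {x : E}

lemma eventuallyEq_rpow_mul_of_homogeneous (hhom : ∀ l : ℝ, 0 < l → h (l • x) = l ^ γ * h x) :
    (fun l : ℝ => h (l • x)) =ᶠ[𝓝 1] fun l => l ^ γ * h x := by
  filter_upwards [lt_mem_nhds (zero_lt_one' ℝ)] with l hl using hhom l hl

lemma fderiv_apply_self_of_homogeneous (hh : DifferentiableAt ℝ h x)
    (hhom : ∀ l : ℝ, 0 < l → h (l • x) = l ^ γ * h x) : fderiv ℝ h x x = γ * h x := by
  have hcurve : HasDerivAt (fun l : ℝ => l • x) x 1 := by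
    simpa using (hasDerivAt_id (1 : ℝ)).smul_const x
  have hpow := ((hasDerivAt_rpow_const (p := γ) (Or.inl one_ne_zero)).mul_const (h x)).deriv
  rw [← (eventuallyEq_rpow_mul_of_homogeneous hhom).deriv_eq,
    deriv_comp_curve (by rwa [one_smul]) hcurve] at hpow
  simpa using hpow

lemma fderiv_fderiv_apply_self_of_homogeneous (hh : ContDiffAt ℝ 2 h x)
    (hhom : ∀ l : ℝ, 0 < l → h (l • x) = l ^ γ * h x) :
    fderiv ℝ (fderiv ℝ h) x x x = γ * (γ - 1) * h x := by
  have hcurve : ∀ l : ℝ, HasDerivAt (fun l : ℝ => l • x) x l := fun l => by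
    simpa using (hasDerivAt_id l).smul_const x
  have hpow : deriv (fun l : ℝ => l ^ γ * h x) =ᶠ[𝓝 1] fun l => γ * l ^ (γ - 1) * h x := by
    filter_upwards [lt_mem_nhds (zero_lt_one' ℝ)] with l hl
    exact ((hasDerivAt_rpow_const (Or.inl hl.ne')).mul_const _).deriv
  have hsecond := (((hasDerivAt_rpow_const (p := γ - 1) (Or.inl one_ne_zero)).const_mul γ).mul_const
    (h x)).deriv
  rw [← hpow.deriv_eq, ← (eventuallyEq_rpow_mul_of_homogeneous hhom).deriv.deriv_eq,
    deriv_deriv_comp_curve (v := fun _ => x) (by rwa [one_smul]) hcurve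
      (hasDerivAt_const 1 x)] at hsecond
  simpa [mul_assoc] using hsecond

end Homogeneous

/-- The point at angle `θ` of the circle through `e` (at `θ = 0`) and `f` (at `θ = π / 2`). With
this parametrisation the velocity of `circleArc e f` is `circleArc f (-e)`. -/
noncomputable def circleArc (e f : E) (θ : ℝ) : E := cos θ • e + sin θ • f

@[simp] lemma circleArc_zero (e f : E) : circleArc e f 0 = e := by simp [circleArc]

lemma circleArc_neg (e f : E) (θ : ℝ) : circleArc e f (-θ) = circleArc e (-f) θ := by
  simp [circleArc]

lemma hasDerivAt_circleArc (e f : E) (θ : ℝ) :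
    HasDerivAt (circleArc e f) (circleArc f (-e) θ) θ := by
  refine (((hasDerivAt_cos θ).smul_const e).add ((hasDerivAt_sin θ).smul_const f)).congr_deriv ?_
  simp only [circleArc]
  module

lemma contDiff_circleArc {k : WithTop ℕ∞} (e f : E) : ContDiff ℝ k (circleArc e f) :=
  (contDiff_cos.smul contDiff_const).add (contDiff_sin.smul contDiff_const)

lemma sin_smul_circleArc_add_cos_smul_circleArc (e f : E) (θ : ℝ) :
    sin θ • circleArc e f θ + cos θ • circleArc f (-e) θ = f := by
  have hone : (sin θ ^ 2 + cos θ ^ 2) • f = f := by rw [sin_sq_add_cos_sq, one_smul]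
  rw [circleArc, circleArc]
  exact .trans (by module) hone

lemma bilin_circleArc_add_bilin_circleArc (B : E →L[ℝ] E →L[ℝ] ℝ) (e f : E) (θ : ℝ) :
    B (circleArc e f θ) (circleArc e f θ) + B (circleArc f (-e) θ) (circleArc f (-e) θ) =
      B e e + B f f := by
  simp only [circleArc, map_add, map_smul, map_neg, add_apply, smul_apply, neg_apply, smul_eq_mul]
  linear_combination (B e e + B f f) * sin_sq_add_cos_sq θ

lemma mul_fderiv_fderiv_of_const_on_circle {h : E → ℝ} {p e f : E} {r : ℝ} (hr : r ≠ 0)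
    (hh : ContDiffAt ℝ 2 h (p + r • e))
    (hconst : ∀ φ, h (p + r • circleArc e f φ) = h (p + r • e)) :
    r * fderiv ℝ (fderiv ℝ h) (p + r • e) f f = fderiv ℝ h (p + r • e) e := by
  have hc : ∀ φ, HasDerivAt (fun t => p + r • circleArc e f t) (r • circleArc f (-e) φ) φ :=
    fun φ => ((hasDerivAt_circleArc e f φ).const_smul r).const_add p
  have hv : HasDerivAt (fun t => r • circleArc f (-e) t) (-(r • e)) 0 := by
    simpa using (hasDerivAt_circleArc f (-e) 0).fun_const_smul r
  have hsecond := deriv_deriv_comp_curve (by rwa [circleArc_zero]) hc hv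
  simp only [hconst, deriv_const', circleArc_zero, map_smul, map_neg, smul_apply,
    smul_eq_mul] at hsecond
  refine mul_left_cancel₀ hr ?_
  linear_combination -hsecond

end CurveDerivatives

section CircleArcInnerProduct

variable {E : Type*} [NormedAddCommGroup E] [InnerProductSpace ℝ E] {e f : E}

lemma norm_circleArc (he : ‖e‖ = 1) (hf : ‖f‖ = 1) (hef : inner ℝ e f = 0) (θ : ℝ) :
    ‖circleArc e f θ‖ = 1 := by
  have hsq : ‖circleArc e f θ‖ ^ 2 = 1 := by
    rw [circleArc, norm_add_sq_real, norm_smul, norm_smul, he, hf, real_inner_smul_left,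
      real_inner_smul_right, hef]
    simp
  exact (pow_eq_one_iff_of_nonneg (norm_nonneg _) two_ne_zero).1 hsq

end CircleArcInnerProduct

section HalfSpace

variable {n : ℕ}

lemma continuous_x1 : Continuous (x1 : EuclideanSpace ℝ (Fin n) → ℝ) := by
  unfold x1
  split_ifs <;> fun_prop

lemma isOpen_halfSpace : IsOpen (halfSpace n) := isOpen_lt continuous_const continuous_x1

lemma x1_smul (l : ℝ) (x : EuclideanSpace ℝ (Fin n)) : x1 (l • x) = l * x1 x := by
  unfold x1
  split_ifs <;> simp

lemma smul_mem_halfSpace {l : ℝ} (hl : 0 < l) {x : EuclideanSpace ℝ (Fin n)}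
    (hx : x ∈ halfSpace n) : l • x ∈ halfSpace n :=
  (mul_pos hl hx).trans_eq (x1_smul l x).symm

lemma x1_le_norm (x : EuclideanSpace ℝ (Fin n)) : x1 x ≤ ‖x‖ := by
  unfold x1
  split_ifs
  · exact (le_abs_self _).trans (PiLp.norm_apply_le x _)
  · exact norm_nonneg x

/-- `h` is symmetric about the `x₁`-axis on the half-space. -/
def IsAxiallySymmetric (h : EuclideanSpace ℝ (Fin n) → ℝ) : Prop :=
  ∀ x ∈ halfSpace n, ∀ y ∈ halfSpace n, x1 x = x1 y → ‖x‖ = ‖y‖ → h x = h y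

/-- `h` is homogeneous of degree `γ` on the half-space. -/
def IsHomogeneousOfDegree (γ : ℝ) (h : EuclideanSpace ℝ (Fin n) → ℝ) : Prop :=
  ∀ l : ℝ, 0 < l → ∀ x ∈ halfSpace n, h (l • x) = l ^ γ * h x

end HalfSpace

section Profile

variable {m : ℕ} {h : EuclideanSpace ℝ (Fin (m + 2)) → ℝ} {γ μ θ : ℝ}

/-- The point at angle `θ` from the `x₁`-axis of the unit circle in the `x₁x₂`-plane. -/
noncomputable def meridian (m : ℕ) : ℝ → EuclideanSpace ℝ (Fin (m + 2)) :=
  circleArc (single 0 1) (single 1 1)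

/-- The restriction of `h` to the meridian; it determines an axially symmetric `h` on the unit
half-sphere. -/
noncomputable def profile (h : EuclideanSpace ℝ (Fin (m + 2)) → ℝ) (θ : ℝ) : ℝ := h (meridian m θ)

lemma x1_circleArc {f : EuclideanSpace ℝ (Fin (m + 2))} (hf : f 0 = 0) (θ : ℝ) :
    x1 (circleArc (single 0 1) f θ) = cos θ := by
  simp [x1, circleArc, hf]

lemma norm_circleArc_single_zero {f : EuclideanSpace ℝ (Fin (m + 2))} (hf : f 0 = 0)
    (hf1 : ‖f‖ = 1) (θ : ℝ) : ‖circleArc (single 0 1) f θ‖ = 1 :=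
  norm_circleArc (by simp) hf1 (by simp [EuclideanSpace.inner_single_left, hf]) θ

lemma circleArc_mem_halfSpace {f : EuclideanSpace ℝ (Fin (m + 2))} (hf : f 0 = 0)
    (hθ : 0 < cos θ) : circleArc (single 0 1) f θ ∈ halfSpace (m + 2) :=
  hθ.trans_eq (x1_circleArc hf θ).symm

lemma x1_meridian (θ : ℝ) : x1 (meridian m θ) = cos θ := x1_circleArc (by simp) θ

lemma norm_meridian (θ : ℝ) : ‖meridian m θ‖ = 1 :=
  norm_circleArc_single_zero (by simp) (by simp) θ

lemma meridian_mem_halfSpace (hθ : 0 < cos θ) : meridian m θ ∈ halfSpace (m + 2) :=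
  circleArc_mem_halfSpace (by simp) hθ

lemma IsAxiallySymmetric.apply_circleArc (hsymm : IsAxiallySymmetric h)
    {f : EuclideanSpace ℝ (Fin (m + 2))} (hf : f 0 = 0) (hf1 : ‖f‖ = 1) (hθ : 0 < cos θ) :
    h (circleArc (single 0 1) f θ) = profile h θ :=
  hsymm _ (circleArc_mem_halfSpace hf hθ) _ (meridian_mem_halfSpace hθ)
    (by rw [x1_circleArc hf, x1_meridian])
    (by rw [norm_circleArc_single_zero hf hf1, norm_meridian])

lemma IsAxiallySymmetric.profile_neg (hsymm : IsAxiallySymmetric h) (hθ : 0 < cos θ) :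
    profile h (-θ) = profile h θ := by
  rw [← hsymm.apply_circleArc (f := -single 1 1) (by simp) (by simp) hθ, profile, meridian,
    circleArc_neg]

lemma deriv_profile (hC : DifferentiableAt ℝ h (meridian m θ)) :
    deriv (profile h) θ =
      fderiv ℝ h (meridian m θ) (circleArc (single 1 1) (-single 0 1) θ) :=
  deriv_comp_curve hC (hasDerivAt_circleArc _ _ θ)

lemma deriv_deriv_profile (hC : ContDiffAt ℝ 2 h (meridian m θ)) :
    deriv (deriv (profile h)) θ =
      fderiv ℝ (fderiv ℝ h) (meridian m θ) (circleArc (single 1 1) (-single 0 1) θ)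
        (circleArc (single 1 1) (-single 0 1) θ) - fderiv ℝ h (meridian m θ) (meridian m θ) := by
  have hacc : HasDerivAt (circleArc (single 1 1) (-single 0 1)) (-meridian m θ) θ := by
    refine (hasDerivAt_circleArc _ _ θ).congr_deriv ?_
    simp only [meridian, circleArc]
    module
  rw [sub_eq_add_neg, ← map_neg]
  exact deriv_deriv_comp_curve hC (hasDerivAt_circleArc _ _) hacc

-- `h` is constant on the circle of radius `sin θ` through `meridian m θ` in a plane orthogonal to
-- the axis, parametrised by `φ ↦ circleArc e₀ (circleArc e₁ eⱼ φ) θ`, `eⱼ ⟂ e₀, e₁`.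
lemma IsAxiallySymmetric.sin_mul_fderiv_fderiv_single (hsymm : IsAxiallySymmetric h)
    (hC : ContDiffAt ℝ 2 h (meridian m θ)) (hcos : 0 < cos θ) (hsin : 0 < sin θ) (j : Fin m) :
    sin θ * fderiv ℝ (fderiv ℝ h) (meridian m θ) (single j.succ.succ 1) (single j.succ.succ 1) =
      fderiv ℝ h (meridian m θ) (single 1 1) := by
  have hne : (1 : Fin (m + 2)) ≠ j.succ.succ := by simp [Fin.ext_iff]
  refine mul_fderiv_fderiv_of_const_on_circle (p := cos θ • single 0 1) hsin.ne' hC fun φ => ?_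
  have hortho : inner ℝ (single (1 : Fin (m + 2)) (1 : ℝ)) (single j.succ.succ 1) = 0 := by
    simp [EuclideanSpace.inner_single_left, hne]
  exact hsymm.apply_circleArc (by simp [circleArc])
    (norm_circleArc (by simp) (by simp) hortho φ) hcos

lemma IsAxiallySymmetric.lap_meridian (hsymm : IsAxiallySymmetric h)
    (hC : ContDiffAt ℝ 2 h (meridian m θ)) (hcos : 0 < cos θ) (hsin : 0 < sin θ) :
    lap h (meridian m θ) =
      fderiv ℝ (fderiv ℝ h) (meridian m θ) (meridian m θ) (meridian m θ) +
      fderiv ℝ (fderiv ℝ h) (meridian m θ) (circleArc (single 1 1) (-single 0 1) θ)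
        (circleArc (single 1 1) (-single 0 1) θ) +
      m * (fderiv ℝ h (meridian m θ) (single 1 1) / sin θ) := by
  have hplane := bilin_circleArc_add_bilin_circleArc (fderiv ℝ (fderiv ℝ h) (meridian m θ))
    (single 0 1) (single 1 1) θ
  have hperp : ∀ j : Fin m, fderiv ℝ (fderiv ℝ h) (meridian m θ) (single j.succ.succ 1)
      (single j.succ.succ 1) = fderiv ℝ h (meridian m θ) (single 1 1) / sin θ := fun j =>
    eq_div_of_mul_eq hsin.ne'
      ((mul_comm _ _).trans (hsymm.sin_mul_fderiv_fderiv_single hC hcos hsin j))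
  simp only [lap, iteratedFDeriv_two_apply, Fin.sum_univ_succ, Matrix.cons_val_zero,
    Matrix.cons_val_one, hperp, Finset.sum_const, Finset.card_univ, Fintype.card_fin,
    nsmul_eq_mul, Fin.succ_zero_eq_one]
  rw [← add_assoc, ← hplane, meridian]

lemma lap_meridian_eq_profile (hsymm : IsAxiallySymmetric h) (hhom : IsHomogeneousOfDegree γ h)
    (hC : ContDiffAt ℝ 2 h (meridian m θ)) (hcos : 0 < cos θ) (hsin : 0 < sin θ) :
    lap h (meridian m θ) = deriv (deriv (profile h)) θ + m * cot θ * deriv (profile h) θ +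
      γ * (γ + m) * profile h θ := by
  have hray : ∀ l : ℝ, 0 < l → h (l • meridian m θ) = l ^ γ * h (meridian m θ) :=
    fun l hl => hhom l hl _ (meridian_mem_halfSpace hcos)
  have hdiff : DifferentiableAt ℝ h (meridian m θ) := hC.differentiableAt two_ne_zero
  have heuler : fderiv ℝ h (meridian m θ) (meridian m θ) = γ * profile h θ :=
    fderiv_apply_self_of_homogeneous hdiff hray
  have hradial : fderiv ℝ (fderiv ℝ h) (meridian m θ) (meridian m θ) (meridian m θ) =
      γ * (γ - 1) * profile h θ :=
    fderiv_fderiv_apply_self_of_homogeneous hC hray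
  have hequator : fderiv ℝ h (meridian m θ) (single 1 1) =
      sin θ * (γ * profile h θ) + cos θ * deriv (profile h) θ := by
    rw [deriv_profile hdiff, ← heuler, ← smul_eq_mul, ← smul_eq_mul, ← map_smul, ← map_smul,
      ← map_add]
    exact congrArg _ (sin_smul_circleArc_add_cos_smul_circleArc _ _ θ).symm
  rw [hsymm.lap_meridian hC hcos hsin, hradial, hequator, deriv_deriv_profile hC, heuler,
    cot_eq_cos_div_sin]
  field_simp
  ring

theorem isAngularSolution_profile (hC : ContDiffOn ℝ 2 h (halfSpace (m + 2)))
    (hharm : ∀ x ∈ halfSpace (m + 2), lap h x + (μ / (x1 x) ^ 2) * h x = 0)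
    (hsymm : IsAxiallySymmetric h) (hhom : IsHomogeneousOfDegree γ h) :
    IsAngularSolution m μ (γ * (γ + m)) (profile h) where
  contDiffOn := hC.comp (contDiff_circleArc _ _).contDiffOn
    fun _ hθ => meridian_mem_halfSpace (cos_pos_of_mem_Ioo hθ)
  deriv_zero := by
    have heven : (fun θ => profile h (-θ)) =ᶠ[𝓝 0] profile h := by
      filter_upwards [Ioo_mem_nhds (neg_neg_of_pos pi_div_two_pos) pi_div_two_pos] with θ hθ
      exact hsymm.profile_neg (cos_pos_of_mem_Ioo hθ)
    have hderiv := heven.deriv_eq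
    rw [deriv_comp_neg, neg_zero] at hderiv
    linarith
  deriv_deriv θ hθ := by
    have hcos := cos_pos_of_mem_Ico_zero_pi_div_two (Ioo_subset_Ico_self hθ)
    have hmem := meridian_mem_halfSpace (m := m) hcos
    have heq := hharm _ hmem
    rw [lap_meridian_eq_profile hsymm hhom (hC.contDiffAt (isOpen_halfSpace.mem_nhds hmem)) hcos
      (sin_pos_of_mem_Ioo_zero_pi_div_two hθ), x1_meridian] at heq
    rw [profile] at heq ⊢
    linear_combination heq

lemma arccos_x1_div_norm_mem_Ico {n : ℕ} {x : EuclideanSpace ℝ (Fin n)} (hx : x ∈ halfSpace n) :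
    arccos (x1 x / ‖x‖) ∈ Ico 0 (π / 2) :=
  ⟨arccos_nonneg _, arccos_lt_pi_div_two.2 (div_pos hx (hx.trans_le (x1_le_norm x)))⟩

lemma cos_arccos_x1_div_norm {n : ℕ} {x : EuclideanSpace ℝ (Fin n)} (hx : x ∈ halfSpace n) :
    cos (arccos (x1 x / ‖x‖)) = x1 x / ‖x‖ := by
  have hnorm : 0 < ‖x‖ := hx.trans_le (x1_le_norm x)
  exact cos_arccos (by linarith [div_pos hx hnorm]) ((div_le_one hnorm).2 (x1_le_norm x))

lemma eq_norm_rpow_mul_profile (hsymm : IsAxiallySymmetric h) (hhom : IsHomogeneousOfDegree γ h)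
    {x : EuclideanSpace ℝ (Fin (m + 2))} (hx : x ∈ halfSpace (m + 2)) :
    h x = ‖x‖ ^ γ * profile h (arccos (x1 x / ‖x‖)) := by
  have hnorm : 0 < ‖x‖ := hx.trans_le (x1_le_norm x)
  have hcos := cos_pos_of_mem_Ico_zero_pi_div_two (arccos_x1_div_norm_mem_Ico hx)
  have hmem := meridian_mem_halfSpace (m := m) hcos
  rw [profile, ← hhom _ hnorm _ hmem]
  refine hsymm _ hx _ (smul_mem_halfSpace hnorm hmem) ?_ ?_
  · rw [x1_smul, x1_meridian, cos_arccos_x1_div_norm hx, mul_div_cancel₀ _ hnorm.ne']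
  · rw [norm_smul, norm_norm, norm_meridian, mul_one]

lemma eq_mul_rpow_of_profile_eq {α C : ℝ} (hsymm : IsAxiallySymmetric h)
    (hhom : IsHomogeneousOfDegree γ h)
    (hprofile : ∀ θ ∈ Ico 0 (π / 2), profile h θ = C * cos θ ^ α)
    {x : EuclideanSpace ℝ (Fin (m + 2))} (hx : x ∈ halfSpace (m + 2)) :
    h x = C * x1 x ^ α * ‖x‖ ^ (γ - α) := by
  have hnorm : 0 < ‖x‖ := hx.trans_le (x1_le_norm x)
  rw [eq_norm_rpow_mul_profile hsymm hhom hx, hprofile _ (arccos_x1_div_norm_mem_Ico hx),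
    cos_arccos_x1_div_norm hx, div_rpow (le_of_lt hx) hnorm.le, rpow_sub hnorm]
  ring

lemma eventually_profile_le {α c δ : ℝ} (hδ : 0 < δ)
    (hbound : ∀ x ∈ halfSpace (m + 2), ‖x‖ = 1 → x1 x < δ → h x ≤ c * x1 x ^ α) :
    ∀ᶠ θ in 𝓝[<] (π / 2), profile h θ ≤ c * cos θ ^ α := by
  have hcos : Tendsto cos (𝓝[<] (π / 2)) (𝓝[>] 0) := tendsto_cos_pi_div_two
  filter_upwards [hcos.eventually (Ioo_mem_nhdsGT hδ)] with θ hθ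
  simpa only [profile, x1_meridian] using hbound _ (meridian_mem_halfSpace hθ.1) (norm_meridian θ)
    (by simpa only [x1_meridian] using hθ.2)

end Profile

lemma one_half_le_aPlus (μ : ℝ) : 1 / 2 ≤ aPlus μ := le_add_of_nonneg_right (sqrt_nonneg _)

lemma aPlus_sq_sub_aPlus_add {μ : ℝ} (hμ : μ ≤ 1 / 4) : aPlus μ ^ 2 - aPlus μ + μ = 0 := by
  rw [aPlus]
  linear_combination sq_sqrt (sub_nonneg.2 hμ)

theorem stmt6_general (n : ℕ) (hn : 2 ≤ n) (μ γ : ℝ) (hμ : μ ≤ 1 / 4)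
    (h : EuclideanSpace ℝ (Fin n) → ℝ)
    (hC2 : ContDiffOn ℝ 2 h (halfSpace n))
    (hpos : ∀ x ∈ halfSpace n, 0 < h x)
    (hharm : ∀ x ∈ halfSpace n, lap h x + (μ / (x1 x) ^ 2) * h x = 0)
    (hsymm : IsAxiallySymmetric h) (hhom : IsHomogeneousOfDegree γ h)
    (hbound : ∃ c, ∃ δ > (0 : ℝ), ∀ x ∈ halfSpace n,
      ‖x‖ = 1 → x1 x < δ → h x ≤ c * x1 x ^ aPlus μ) :
    ∃ l > (0 : ℝ),
      (∀ x ∈ halfSpace n, h x = l * x1 x ^ aPlus μ) ∨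
      (∀ x ∈ halfSpace n, h x = l * x1 x ^ aPlus μ * ‖x‖ ^ (-((n : ℝ) - 2 + 2 * aPlus μ))) := by
  obtain ⟨m, rfl⟩ := Nat.exists_eq_add_of_le' hn
  obtain ⟨c, δ, hδ, hbound⟩ := hbound
  have hprofile_pos : ∀ θ ∈ Ico 0 (π / 2), 0 < profile h θ := fun θ hθ =>
    hpos _ (meridian_mem_halfSpace (cos_pos_of_mem_Ico_zero_pi_div_two hθ))
  obtain ⟨hγ, C, hC, hprofile⟩ :=
    (isAngularSolution_profile hC2 hharm hsymm hhom).exists_eq_mul_cos_rpow m.cast_nonneg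
      (one_half_le_aPlus μ) (aPlus_sq_sub_aPlus_add hμ) hprofile_pos
      (eventually_profile_le hδ hbound)
  have hform : ∀ x ∈ halfSpace (m + 2), h x = C * x1 x ^ aPlus μ * ‖x‖ ^ (γ - aPlus μ) :=
    fun x hx => eq_mul_rpow_of_profile_eq hsymm hhom hprofile hx
  refine ⟨C, hC, hγ.imp (fun hγ x hx => ?_) fun hγ x hx => ?_⟩
  · rw [hform x hx, hγ, sub_self, rpow_zero, mul_one]
  · rw [hform x hx, hγ]
    congr 2
    push_cast
    ring

/-- a positive, axially symmetric, homogeneous `L_μ`-harmonic in the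
class `H_{μ,0}` is a positive multiple of either `x₁^{α₊}` or
`x₁^{α₊}|x|^{−(n−2+2α₊)}`. -/
theorem stmt6 (n : ℕ) (hn : 2 ≤ n) (μ γ : ℝ) (hμ : μ < 1 / 4)
    (h : EuclideanSpace ℝ (Fin n) → ℝ)
    (hC2 : ContDiffOn ℝ 2 h (halfSpace n))
    (hpos : ∀ x ∈ halfSpace n, 0 < h x)
    (hharm : ∀ x ∈ halfSpace n, lap h x + (μ / (x1 x) ^ 2) * h x = 0)
    (haxial : ∀ x ∈ halfSpace n, ∀ y ∈ halfSpace n, x1 x = x1 y → ‖x‖ = ‖y‖ → h x = h y)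
    (hhom : ∀ l : ℝ, 0 < l → ∀ x ∈ halfSpace n, h (l • x) = l ^ γ * h x)
    (hclass : ∀ R > (1 : ℝ), ∃ c > (0 : ℝ), ∃ δ > (0 : ℝ), ∀ x ∈ halfSpace n,
      R⁻¹ ≤ ‖x‖ → ‖x‖ ≤ R → x1 x < δ →
      c⁻¹ * x1 x ^ aPlus μ ≤ h x ∧ h x ≤ c * x1 x ^ aPlus μ) :
    ∃ l > (0 : ℝ),
      (∀ x ∈ halfSpace n, h x = l * x1 x ^ aPlus μ) ∨
      (∀ x ∈ halfSpace n, h x = l * x1 x ^ aPlus μ * ‖x‖ ^ (-((n : ℝ) - 2 + 2 * aPlus μ))) := by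
  obtain ⟨c, -, δ, hδ, hbound⟩ := hclass 2 one_lt_two
  exact stmt6_general n hn μ γ hμ.le h hC2 hpos hharm haxial hhom ⟨c, δ, hδ, fun x hx hx1 hxδ =>
    (hbound x hx (by rw [hx1]; norm_num) (by rw [hx1]; norm_num) hxδ).2⟩
end
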